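/- arXiv:1301.1872 — 2 statements merged into one kernel-verified Lean document; each statement's English description precedes it below -/
import Mathlib

section
/- (Capacitary Poincaré inequality, for continuously differentiable functions.) Let n ≥ 2 and 1 < p < ∞, let x₀ ∈ ℝⁿ and ρ > 0, and let w : ℝⁿ → ℝ be continuously differentiable. Set K_ρ(w) := { x ∈ B̄(x₀,ρ) : w(x) = 0 }. Then there exists a constant c depending only on n and p such that cap_p(K_ρ(w), B(x₀,2ρ)) · ⨍_{B(x₀,2ρ)} |w|^p dx ≤ c ∫_{B(x₀,2ρ)} |Dw|^p dx, where ⨍ denotes the integral average. -/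
open MeasureTheory Set ENNReal

/-- The variational `p`-capacity of a set `K` relative to an open set `U ⊆ ℝⁿ`:
`cap_p(K,U) = inf { ∫_U |Dφ|^p : φ smooth, compactly supported in U, φ ≥ 1 on K }`. -/
noncomputable def pCapacity (n : ℕ) (p : ℝ) (K U : Set (EuclideanSpace ℝ (Fin n))) : ℝ≥0∞ :=
  ⨅ (φ : EuclideanSpace ℝ (Fin n) → ℝ) (_ : ContDiff ℝ (⊤ : ℕ∞) φ) (_ : HasCompactSupport φ)
    (_ : tsupport φ ⊆ U) (_ : ∀ x ∈ K, 1 ≤ φ x),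
      ∫⁻ x in U, ENNReal.ofReal (‖fderiv ℝ φ x‖ ^ p)


namespace CapPoincare

open scoped Convolution

lemma enorm_add_aux {F : Type*} [NormedAddCommGroup F] (a b : F) :
    ‖a + b‖ₑ ≤ ‖a‖ₑ + ‖b‖ₑ := enorm_add_le a b

lemma smooth_approx {n : ℕ} (φ : EuclideanSpace ℝ (Fin n) → ℝ) (hφ : ContDiff ℝ 1 φ)
    (hc : HasCompactSupport φ) (U : Set (EuclideanSpace ℝ (Fin n))) (hU : IsOpen U)
    (hsub : tsupport φ ⊆ U) (δ : ℝ) (hδ : 0 < δ) :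
    ∃ ψ : EuclideanSpace ℝ (Fin n) → ℝ, ContDiff ℝ (⊤ : ℕ∞) ψ ∧ HasCompactSupport ψ ∧
      tsupport ψ ⊆ U ∧ (∀ x, dist (ψ x) (φ x) ≤ δ) ∧
      ∀ x, dist (fderiv ℝ ψ x) (fderiv ℝ φ x) ≤ δ := by
  obtain ⟨r0, hr0, hr0U⟩ := hc.isCompact.exists_cthickening_subset_open hU hsub
  have hu1 := hc.uniformContinuous_of_continuous hφ.continuous
  have hu2 := (hc.fderiv ℝ).uniformContinuous_of_continuous (hφ.continuous_fderiv one_ne_zero)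
  obtain ⟨r1, hr1, H1⟩ := Metric.uniformContinuous_iff.1 hu1 δ hδ
  obtain ⟨r2, hr2, H2⟩ := Metric.uniformContinuous_iff.1 hu2 δ hδ
  set r := min r0 (min r1 r2) with hr
  have hrpos : 0 < r := by positivity
  let b : ContDiffBump (0 : EuclideanSpace ℝ (Fin n)) := ⟨r / 2, r, by positivity, by linarith⟩
  have hbloc : LocallyIntegrable (b.normed volume) volume :=
    (b.continuous_normed).locallyIntegrable
  have hts : tsupport (b.normed volume ⋆[ContinuousLinearMap.lsmul ℝ ℝ, volume] φ)
      ⊆ Metric.cthickening r0 (tsupport φ) := by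
    refine closure_minimal ?_ Metric.isClosed_cthickening
    refine (support_convolution_subset_swap _).trans ?_
    rintro _ ⟨x, hx, y, hy, rfl⟩
    rw [b.support_normed_eq] at hy
    refine Metric.mem_cthickening_of_dist_le _ x _ _ (subset_tsupport _ hx) ?_
    have h1 : ‖y‖ < r := by simpa using hy
    have : r ≤ r0 := min_le_left _ _
    simp only [dist_eq_norm, add_sub_cancel_left]
    linarith
  have hcs : HasCompactSupport (b.normed volume ⋆[ContinuousLinearMap.lsmul ℝ ℝ, volume] φ) :=
    HasCompactSupport.of_support_subset_isCompact hc.isCompact.cthickening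
      ((subset_tsupport _).trans hts)
  refine ⟨b.normed volume ⋆[ContinuousLinearMap.lsmul ℝ ℝ, volume] φ, ?_, hcs,
    hts.trans hr0U, ?_, ?_⟩
  · exact b.hasCompactSupport_normed.contDiff_convolution_left _ b.contDiff_normed
      hφ.continuous.locallyIntegrable
  · intro x
    refine b.dist_normed_convolution_le hφ.continuous.aestronglyMeasurable fun y hy => ?_
    exact (H1 (lt_of_lt_of_le (Metric.mem_ball.1 hy)
      ((min_le_right _ _).trans (min_le_left _ _)))).le
  · intro x
    rw [(hc.hasFDerivAt_convolution_right (ContinuousLinearMap.lsmul ℝ ℝ) hbloc hφ x).fderiv]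
    have : (b.normed volume ⋆[(ContinuousLinearMap.lsmul ℝ ℝ).precompR
        (EuclideanSpace ℝ (Fin n)), volume] fderiv ℝ φ) x
        = (b.normed volume ⋆[ContinuousLinearMap.lsmul ℝ ℝ, volume] fderiv ℝ φ) x := rfl
    rw [this]
    refine b.dist_normed_convolution_le
      (hφ.continuous_fderiv one_ne_zero).aestronglyMeasurable fun y hy => ?_
    exact (H2 (lt_of_lt_of_le (Metric.mem_ball.1 hy)
      ((min_le_right _ _).trans (min_le_right _ _)))).le

lemma ofReal_norm_rpow {F : Type*} [NormedAddCommGroup F] (v : F) (p : ℝ) (hp : 0 ≤ p) :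
    ENNReal.ofReal (‖v‖ ^ p) = ‖v‖ₑ ^ p := by
  rw [← ENNReal.ofReal_rpow_of_nonneg (norm_nonneg v) hp, ofReal_norm]

/-- capacity estimate by `C¹` test functions -/
lemma cap_le {n : ℕ} (p : ℝ) (hp : 1 < p) (K U : Set (EuclideanSpace ℝ (Fin n)))
    (hU : IsOpen U) (hvol : volume U ≠ ∞)
    (φ : EuclideanSpace ℝ (Fin n) → ℝ) (hφ : ContDiff ℝ 1 φ)
    (hc : HasCompactSupport φ) (hsub : tsupport φ ⊆ U) (hK : ∀ x ∈ K, 1 ≤ φ x) :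
    pCapacity n p K U ≤ 2 ^ p * 2 ^ (p - 1) * ∫⁻ x in U, ‖fderiv ℝ φ x‖ₑ ^ p := by
  have hp0 : 0 ≤ p := by linarith
  have key : ∀ δ : ℝ, 0 < δ → δ ≤ 1 / 2 → pCapacity n p K U ≤
      2 ^ p * 2 ^ (p - 1) * (∫⁻ x in U, ‖fderiv ℝ φ x‖ₑ ^ p)
        + 2 ^ p * 2 ^ (p - 1) * volume U * (ENNReal.ofReal δ) ^ p := by
    intro δ hδ hδ2
    obtain ⟨ψ, h1, h2, h3, h4, h5⟩ := smooth_approx φ hφ hc U hU hsub δ hδ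
    have hfd : ∀ x, fderiv ℝ (fun x => 2 * ψ x) x = (2 : ℝ) • fderiv ℝ ψ x := by
      intro x
      exact fderiv_const_mul (h1.differentiable (by simp) x) 2
    have hle : pCapacity n p K U ≤
        ∫⁻ x in U, ENNReal.ofReal (‖fderiv ℝ (fun x => 2 * ψ x) x‖ ^ p) := by
      unfold pCapacity
      refine iInf_le_of_le (fun x => 2 * ψ x) (iInf_le_of_le (contDiff_const.mul h1)
        (iInf_le_of_le (h2.mul_left) (iInf_le_of_le ?_ (iInf_le_of_le ?_ le_rfl))))
      · exact (tsupport_mul_subset_right (f := fun _ => (2 : ℝ)) (g := ψ)).trans h3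
      · intro x hx
        have := abs_le.1 (Real.dist_eq _ _ ▸ h4 x)
        have := hK x hx
        linarith
    refine hle.trans ?_
    have hpt : ∀ x, ENNReal.ofReal (‖fderiv ℝ (fun x => 2 * ψ x) x‖ ^ p) ≤
        2 ^ p * 2 ^ (p - 1) * ‖fderiv ℝ φ x‖ₑ ^ p
          + 2 ^ p * 2 ^ (p - 1) * (ENNReal.ofReal δ) ^ p := by
      intro x
      rw [ofReal_norm_rpow _ _ hp0, hfd, enorm_smul, ENNReal.mul_rpow_of_nonneg _ _ hp0]
      have h2e : ‖(2 : ℝ)‖ₑ = 2 := by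
        rw [← ofReal_norm]; simp
      rw [h2e, mul_assoc, mul_assoc, ← mul_add, ← mul_add]
      gcongr
      refine le_trans ?_ (ENNReal.rpow_add_le_mul_rpow_add_rpow _ _ hp.le)
      gcongr
      have h6 := h5 x
      rw [dist_eq_norm] at h6
      calc ‖fderiv ℝ ψ x‖ₑ = ‖fderiv ℝ φ x + (fderiv ℝ ψ x - fderiv ℝ φ x)‖ₑ := by
            congr 1; abel
        _ ≤ ‖fderiv ℝ φ x‖ₑ + ‖fderiv ℝ ψ x - fderiv ℝ φ x‖ₑ := enorm_add_aux _ _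
        _ ≤ _ := by
            gcongr
            rw [← ofReal_norm]
            exact ENNReal.ofReal_le_ofReal h6
    refine (lintegral_mono hpt).trans ?_
    rw [lintegral_add_right _ measurable_const, lintegral_const_mul' _ _ (by finiteness)]
    simp only [lintegral_const, Measure.restrict_apply MeasurableSet.univ, univ_inter]
    apply le_of_eq; ring
  have hlim : Filter.Tendsto (fun δ : ℝ =>
      2 ^ p * 2 ^ (p - 1) * (∫⁻ x in U, ‖fderiv ℝ φ x‖ₑ ^ p)
        + 2 ^ p * 2 ^ (p - 1) * volume U * (ENNReal.ofReal δ) ^ p) (nhdsWithin 0 (Ioi 0))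
      (nhds (2 ^ p * 2 ^ (p - 1) * (∫⁻ x in U, ‖fderiv ℝ φ x‖ₑ ^ p)
        + 2 ^ p * 2 ^ (p - 1) * volume U * 0)) := by
    refine Filter.Tendsto.mono_left ?_ nhdsWithin_le_nhds
    refine Filter.Tendsto.const_add _ (ENNReal.Tendsto.const_mul ?_ (Or.inr (by finiteness)))
    have : Continuous fun δ : ℝ => (ENNReal.ofReal δ) ^ p :=
      (ENNReal.continuous_rpow_const).comp ENNReal.continuous_ofReal
    have h := this.tendsto 0
    simpa [ENNReal.zero_rpow_of_pos (by linarith : 0 < p)] using h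
  rw [mul_zero, add_zero] at hlim
  refine ge_of_tendsto hlim ?_
  filter_upwards [Ioc_mem_nhdsGT (show (0 : ℝ) < 1 / 2 by norm_num)] with δ hδ
  exact key δ hδ.1 hδ.2

lemma affine_lintegral {n : ℕ} (g : EuclideanSpace ℝ (Fin n) → ℝ≥0∞) (hg : Measurable g)
    (a : EuclideanSpace ℝ (Fin n)) (t : ℝ) (ht : 1 / 2 ≤ t) :
    ∫⁻ y, g (a + t • y) ≤ 2 ^ n * ∫⁻ y, g y := by
  have ht0 : t ≠ 0 := by linarith
  have h1 : ∫⁻ y, g (a + t • y) = ∫⁻ z, g (a + z) ∂(Measure.map (t • ·) volume) := by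
    rw [lintegral_map (by fun_prop) (by fun_prop)]
  rw [h1, Measure.map_addHaar_smul _ ht0, lintegral_smul_measure, lintegral_add_left_eq_self,
    smul_eq_mul]
  gcongr
  simp only [finrank_euclideanSpace, Fintype.card_fin]
  rw [abs_of_nonneg (by positivity), ← inv_pow, ENNReal.ofReal_pow (by positivity)]
  gcongr
  rw [show (2 : ℝ≥0∞) = ENNReal.ofReal 2 by simp]
  apply ENNReal.ofReal_le_ofReal
  rw [inv_le_comm₀ (by linarith) (by norm_num)]
  linarith

lemma double_affine {n : ℕ} (B : Set (EuclideanSpace ℝ (Fin n)))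
    (g : EuclideanSpace ℝ (Fin n) → ℝ≥0∞) (hg : Measurable g) (t : ℝ) :
    ∫⁻ x in B, ∫⁻ y in B, g (x + t • (y - x)) ≤ volume B * (2 ^ n * ∫⁻ y, g y) := by
  have base : ∀ s : ℝ, 1 / 2 ≤ s →
      ∫⁻ x in B, ∫⁻ y in B, g (x + s • (y - x)) ≤ volume B * (2 ^ n * ∫⁻ y, g y) := by
    intro s hs
    calc _ ≤ ∫⁻ x in B, 2 ^ n * ∫⁻ y, g y := by
          refine lintegral_mono fun x => ?_
          refine (setLIntegral_le_lintegral _ _).trans ?_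
          refine le_trans (le_of_eq ?_) (affine_lintegral g hg (x - s • x) s hs)
          congr 1; ext y; congr 1; rw [smul_sub]; abel
      _ = _ := by simp [mul_comm]
  rcases le_total (1 / 2) t with h | h
  · exact base t h
  · rw [lintegral_lintegral_swap (by
      have : Measurable (Function.uncurry
        fun x y : EuclideanSpace ℝ (Fin n) => g (x + t • (y - x))) := by
          unfold Function.uncurry; fun_prop
      exact this.aemeasurable)]
    refine le_trans (le_of_eq ?_) (base (1 - t) (by linarith))
    congr 1; ext x; congr 1; ext y; congr 1
    rw [sub_smul, one_smul, smul_sub, smul_sub]; abel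

lemma pointwise_diff {n : ℕ} (p : ℝ) (hp : 1 < p) (w : EuclideanSpace ℝ (Fin n) → ℝ)
    (hw : ContDiff ℝ 1 w) (x y : EuclideanSpace ℝ (Fin n)) :
    ‖w y - w x‖ₑ ^ p ≤ ‖y - x‖ₑ ^ p *
      ∫⁻ t in Ioc (0 : ℝ) 1, ‖fderiv ℝ w (x + t • (y - x))‖ₑ ^ p := by
  have hp0 : 0 < p := by linarith
  have hcf := hw.continuous_fderiv one_ne_zero
  have hcont : Continuous fun t : ℝ => fderiv ℝ w (x + t • (y - x)) := by fun_prop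
  have hd : ∀ t ∈ uIcc (0 : ℝ) 1, HasDerivAt (fun t : ℝ => w (x + t • (y - x)))
      (fderiv ℝ w (x + t • (y - x)) (y - x)) t := by
    intro t _
    have h1 : HasDerivAt (fun t : ℝ => x + t • (y - x)) (y - x) t := by
      simpa using ((hasDerivAt_id t).smul_const (y - x)).const_add x
    exact ((hw.differentiable one_ne_zero) _).hasFDerivAt.comp_hasDerivAt t h1
  have hint := intervalIntegral.integral_eq_sub_of_hasDerivAt hd
    (Continuous.intervalIntegrable (by fun_prop) _ _)
  simp only [one_smul, zero_smul, add_zero, add_sub_cancel] at hint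
  rw [← hint, intervalIntegral.integral_of_le zero_le_one]
  have : IsProbabilityMeasure (volume.restrict (Ioc (0 : ℝ) 1)) := ⟨by simp⟩
  have hJ : (∫⁻ t in Ioc (0 : ℝ) 1, ‖fderiv ℝ w (x + t • (y - x))‖ₑ) ^ p ≤
      ∫⁻ t in Ioc (0 : ℝ) 1, ‖fderiv ℝ w (x + t • (y - x))‖ₑ ^ p := by
    have h := eLpNorm'_le_eLpNorm'_of_exponent_le (μ := volume.restrict (Ioc (0 : ℝ) 1))
      (f := fun t : ℝ => fderiv ℝ w (x + t • (y - x)))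
      zero_lt_one hp.le hcont.aestronglyMeasurable
    have h2 := ENNReal.rpow_le_rpow h hp0.le
    rw [← lintegral_rpow_enorm_eq_rpow_eLpNorm' hp0] at h2
    simpa [eLpNorm'] using h2
  calc _ ≤ (∫⁻ t in Ioc (0 : ℝ) 1, ‖y - x‖ₑ * ‖fderiv ℝ w (x + t • (y - x))‖ₑ) ^ p := by
        gcongr
        refine (enorm_integral_le_lintegral_enorm _).trans (lintegral_mono fun t => ?_)
        rw [mul_comm]
        exact ContinuousLinearMap.le_opENorm _ _
    _ = ‖y - x‖ₑ ^ p * (∫⁻ t in Ioc (0 : ℝ) 1, ‖fderiv ℝ w (x + t • (y - x))‖ₑ) ^ p := by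
        rw [lintegral_const_mul' _ _ (by simp), ENNReal.mul_rpow_of_nonneg _ _ hp0.le]
    _ ≤ _ := by gcongr

lemma poincare {n : ℕ} (p : ℝ) (hp : 1 < p) (w : EuclideanSpace ℝ (Fin n) → ℝ)
    (hw : ContDiff ℝ 1 w) (x₀ : EuclideanSpace ℝ (Fin n)) (ρ : ℝ) (hρ : 0 < ρ) :
    ∫⁻ x in Metric.ball x₀ (2 * ρ), ∫⁻ y in Metric.ball x₀ (2 * ρ), ‖w y - w x‖ₑ ^ p ≤
      ENNReal.ofReal (4 * ρ) ^ p * (volume (Metric.ball x₀ (2 * ρ)) *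
        (2 ^ n * ∫⁻ x in Metric.ball x₀ (2 * ρ), ‖fderiv ℝ w x‖ₑ ^ p)) := by
  have hp0 : 0 < p := by linarith
  have hcf := hw.continuous_fderiv one_ne_zero
  set B := Metric.ball x₀ (2 * ρ) with hB
  have hBm : MeasurableSet B := measurableSet_ball
  set g : EuclideanSpace ℝ (Fin n) → ℝ≥0∞ := B.indicator fun z => ‖fderiv ℝ w z‖ₑ ^ p with hgdef
  have hg : Measurable g :=
    (hcf.enorm.measurable.pow_const p).indicator hBm
  have hmul : ∀ f : EuclideanSpace ℝ (Fin n) → EuclideanSpace ℝ (Fin n) → ℝ≥0∞,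
      ∫⁻ x in B, ∫⁻ y in B, ENNReal.ofReal (4 * ρ) ^ p * f x y =
      ENNReal.ofReal (4 * ρ) ^ p * ∫⁻ x in B, ∫⁻ y in B, f x y := by
    intro f
    have hfin : ENNReal.ofReal (4 * ρ) ^ p ≠ ∞ := by finiteness
    rw [← lintegral_const_mul' _ _ hfin]
    congr 1; ext x
    rw [lintegral_const_mul' _ _ hfin]
  calc _ ≤ ∫⁻ x in B, ∫⁻ y in B, ENNReal.ofReal (4 * ρ) ^ p *
        ∫⁻ t in Ioc (0 : ℝ) 1, g (x + t • (y - x)) := by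
        refine setLIntegral_mono' hBm fun x hx => setLIntegral_mono' hBm fun y hy => ?_
        refine (pointwise_diff p hp w hw x y).trans ?_
        gcongr ?_ ^ p * ?_
        · rw [← ofReal_norm]
          apply ENNReal.ofReal_le_ofReal
          rw [← dist_eq_norm]
          have := dist_triangle_right y x x₀
          have h1 := Metric.mem_ball.1 hx
          have h2 := Metric.mem_ball.1 hy
          linarith
        · refine setLIntegral_mono' measurableSet_Ioc fun t ht => ?_
          have hmem : x + t • (y - x) ∈ B :=
            (convex_ball x₀ (2 * ρ)).add_smul_sub_mem hx hy ⟨ht.1.le, ht.2⟩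
          rw [hgdef, indicator_of_mem hmem]
    _ = ENNReal.ofReal (4 * ρ) ^ p * ∫⁻ t in Ioc (0 : ℝ) 1,
          ∫⁻ x in B, ∫⁻ y in B, g (x + t • (y - x)) := by
        rw [hmul]
        congr 1
        rw [lintegral_lintegral_swap (μ := volume.restrict (Ioc (0 : ℝ) 1))]
        · congr 1; ext x
          rw [lintegral_lintegral_swap]
          apply Measurable.aemeasurable
          unfold Function.uncurry; fun_prop
        · apply Measurable.aemeasurable
          have : Measurable fun q : (ℝ × EuclideanSpace ℝ (Fin n)) × EuclideanSpace ℝ (Fin n) =>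
            g (q.1.2 + q.1.1 • (q.2 - q.1.2)) := by fun_prop
          exact this.lintegral_prod_right'
    _ ≤ ENNReal.ofReal (4 * ρ) ^ p * ∫⁻ t in Ioc (0 : ℝ) 1,
          volume B * (2 ^ n * ∫⁻ y, g y) := by
        gcongr with t
        exact double_affine B g hg t
    _ = _ := by
        rw [hgdef, lintegral_indicator hBm]
        simp

lemma exists_cutoff (n : ℕ) : ∃ M : ℝ, 0 < M ∧ ∀ (x₀ : EuclideanSpace ℝ (Fin n)) (ρ : ℝ), 0 < ρ →
    ∃ η : EuclideanSpace ℝ (Fin n) → ℝ, ContDiff ℝ 1 η ∧ HasCompactSupport η ∧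
      tsupport η ⊆ Metric.ball x₀ (2 * ρ) ∧ (∀ x ∈ Metric.closedBall x₀ ρ, η x = 1) ∧
      (∀ x, ‖η x‖ ≤ 1) ∧ ∀ x, ‖fderiv ℝ η x‖ ≤ M / ρ := by
  let b : ContDiffBump (0 : EuclideanSpace ℝ (Fin n)) := ⟨1, 3 / 2, by norm_num, by norm_num⟩
  have hb : ContDiff ℝ 1 b := b.contDiff
  obtain ⟨M, hM⟩ := (b.hasCompactSupport.fderiv ℝ).exists_bound_of_continuous
    (hb.continuous_fderiv one_ne_zero)
  refine ⟨max M 1, by positivity, fun x₀ ρ hρ => ?_⟩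
  have hts : tsupport (fun x => b (ρ⁻¹ • (x - x₀))) ⊆ Metric.closedBall x₀ (3 / 2 * ρ) := by
    refine closure_minimal ?_ Metric.isClosed_closedBall
    intro x hx
    have h1 : ρ⁻¹ • (x - x₀) ∈ Function.support b := hx
    rw [b.support_eq, mem_ball_zero_iff, norm_smul, Real.norm_of_nonneg (by positivity)] at h1
    rw [mem_closedBall_iff_norm]
    have h2 : ρ⁻¹ * ‖x - x₀‖ < 3 / 2 := h1
    rw [inv_mul_lt_iff₀ hρ] at h2
    linarith
  refine ⟨fun x => b (ρ⁻¹ • (x - x₀)), by fun_prop, ?_, ?_, ?_, ?_, ?_⟩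
  · exact HasCompactSupport.of_support_subset_isCompact (isCompact_closedBall x₀ (3 / 2 * ρ))
      ((subset_tsupport _).trans hts)
  · exact hts.trans (Metric.closedBall_subset_ball (by linarith))
  · intro x hx
    apply b.one_of_mem_closedBall
    rw [mem_closedBall_zero_iff, norm_smul, Real.norm_of_nonneg (by positivity)]
    change ρ⁻¹ * ‖x - x₀‖ ≤ 1
    rw [inv_mul_le_iff₀ hρ, mul_one]
    exact mem_closedBall_iff_norm.1 hx
  · intro x
    rw [Real.norm_of_nonneg b.nonneg]
    exact b.le_one
  · intro x
    have h1 : HasFDerivAt (fun x => ρ⁻¹ • (x - x₀))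
        (ρ⁻¹ • ContinuousLinearMap.id ℝ (EuclideanSpace ℝ (Fin n))) x :=
      ((hasFDerivAt_id x).sub_const x₀).const_smul ρ⁻¹
    have h2 := ((hb.differentiable one_ne_zero) (ρ⁻¹ • (x - x₀))).hasFDerivAt.comp x h1
    have h3 : fderiv ℝ (fun x => b (ρ⁻¹ • (x - x₀))) x =
        ρ⁻¹ • fderiv ℝ b (ρ⁻¹ • (x - x₀)) := by
      refine h2.fderiv.trans ?_
      ext v; simp
    rw [h3, norm_smul, Real.norm_of_nonneg (by positivity), div_eq_inv_mul]
    gcongr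
    exact (hM _).trans (le_max_left _ _)

lemma cap_pointwise {n : ℕ} (p : ℝ) (hp : 1 < p) (M : ℝ)
    (x₀ : EuclideanSpace ℝ (Fin n)) (ρ : ℝ)
    (η : EuclideanSpace ℝ (Fin n) → ℝ) (hη : ContDiff ℝ 1 η) (hηc : HasCompactSupport η)
    (hηs : tsupport η ⊆ Metric.ball x₀ (2 * ρ)) (hη1 : ∀ x ∈ Metric.closedBall x₀ ρ, η x = 1)
    (hηb : ∀ x, ‖η x‖ ≤ 1) (hηd : ∀ x, ‖fderiv ℝ η x‖ ≤ M / ρ)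
    (w : EuclideanSpace ℝ (Fin n) → ℝ) (hw : ContDiff ℝ 1 w) (a : ℝ) :
    pCapacity n p {x ∈ Metric.closedBall x₀ ρ | w x = 0} (Metric.ball x₀ (2 * ρ)) * ‖a‖ₑ ^ p ≤
      2 ^ p * 2 ^ (p - 1) * 2 ^ (p - 1) *
        (ENNReal.ofReal (M / ρ) ^ p * (∫⁻ x in Metric.ball x₀ (2 * ρ), ‖w x - a‖ₑ ^ p) +
          ∫⁻ x in Metric.ball x₀ (2 * ρ), ‖fderiv ℝ w x‖ₑ ^ p) := by
  have hp0 : 0 < p := by linarith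
  rcases eq_or_ne a 0 with rfl | ha
  · simp [ENNReal.zero_rpow_of_pos hp0]
  set B := Metric.ball x₀ (2 * ρ) with hB
  have hcf := hw.continuous_fderiv one_ne_zero
  have hcap := cap_le p hp {x ∈ Metric.closedBall x₀ ρ | w x = 0} B Metric.isOpen_ball
    measure_ball_lt_top.ne (fun x => η x * (1 - w x / a)) (by fun_prop) hηc.mul_right
    ((tsupport_mul_subset_left (f := η) (g := fun x => 1 - w x / a)).trans hηs)
    (by rintro x ⟨hx, hwx⟩; simp [hη1 x hx, hwx])
  have hpt : ∀ x, ‖a‖ₑ ^ p * ‖fderiv ℝ (fun x => η x * (1 - w x / a)) x‖ₑ ^ p ≤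
      2 ^ (p - 1) * (ENNReal.ofReal (M / ρ) ^ p * ‖w x - a‖ₑ ^ p + ‖fderiv ℝ w x‖ₑ ^ p) := by
    intro x
    have hwx := ((hw.differentiable one_ne_zero) x).hasFDerivAt
    have hηx := ((hη.differentiable one_ne_zero) x).hasFDerivAt
    have hD : HasFDerivAt (fun x => η x * (1 - w x / a))
        (η x • (-(a⁻¹ • fderiv ℝ w x)) + (1 - w x / a) • fderiv ℝ η x) x := by
      have h1 : HasFDerivAt (fun x => 1 - w x / a) (-(a⁻¹ • fderiv ℝ w x)) x := by
        have := (hwx.const_mul a⁻¹).const_sub 1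
        simpa only [div_eq_inv_mul] using this
      exact hηx.mul h1
    rw [hD.fderiv, ← ENNReal.mul_rpow_of_nonneg _ _ hp0.le, ← ENNReal.mul_rpow_of_nonneg _ _ hp0.le,
      ← enorm_smul]
    refine le_trans ?_ (ENNReal.rpow_add_le_mul_rpow_add_rpow _ _ hp.le)
    gcongr
    have he : a • (η x • (-(a⁻¹ • fderiv ℝ w x)) + (1 - w x / a) • fderiv ℝ η x) =
        (-(w x - a)) • fderiv ℝ η x + (-η x) • fderiv ℝ w x := by
      ext v
      simp
      field_simp
      ring
    rw [he]
    refine (enorm_add_aux _ _).trans ?_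
    rw [enorm_smul, enorm_smul, enorm_neg, enorm_neg]
    refine add_le_add ?_ ?_
    · rw [mul_comm]
      gcongr
      rw [← ofReal_norm]
      exact ENNReal.ofReal_le_ofReal (hηd x)
    · have : ‖η x‖ₑ ≤ 1 := by
        rw [← ofReal_norm]; simpa using hηb x
      exact mul_le_of_le_one_left zero_le this
  have hafin : ‖a‖ₑ ^ p ≠ ∞ := by finiteness
  calc _ ≤ (2 ^ p * 2 ^ (p - 1) *
        ∫⁻ x in B, ‖fderiv ℝ (fun x => η x * (1 - w x / a)) x‖ₑ ^ p) * ‖a‖ₑ ^ p := by gcongr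
    _ = 2 ^ p * 2 ^ (p - 1) *
        ∫⁻ x in B, ‖a‖ₑ ^ p * ‖fderiv ℝ (fun x => η x * (1 - w x / a)) x‖ₑ ^ p := by
        rw [lintegral_const_mul' _ _ hafin]; ring
    _ ≤ 2 ^ p * 2 ^ (p - 1) * ∫⁻ x in B, 2 ^ (p - 1) *
        (ENNReal.ofReal (M / ρ) ^ p * ‖w x - a‖ₑ ^ p + ‖fderiv ℝ w x‖ₑ ^ p) := by
        exact mul_le_mul_right (lintegral_mono hpt) _
    _ = _ := by
        rw [lintegral_const_mul' _ _ (by finiteness), lintegral_add_right _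
          (hcf.enorm.measurable.pow_const p), lintegral_const_mul' _ _ (by finiteness)]
        ring

end CapPoincare

open CapPoincare

/-- **capacitary Poincaré inequality.** For `1 < p < ∞` there is `c = c(n,p)`
such that for every `C¹` function `w : ℝⁿ → ℝ`, with `K_ρ(w) = {x ∈ B̄(x₀,ρ) : w x = 0}`,
`cap_p(K_ρ(w), B(x₀,2ρ)) · ⨍_{B(x₀,2ρ)} |w|^p ≤ c ∫_{B(x₀,2ρ)} |Dw|^p`. -/
theorem capacitary_poincare (n : ℕ) (hn : 2 ≤ n) (p : ℝ) (hp : 1 < p) :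
    ∃ c : ℝ, 0 < c ∧
      ∀ (x₀ : EuclideanSpace ℝ (Fin n)) (ρ : ℝ), 0 < ρ →
      ∀ w : EuclideanSpace ℝ (Fin n) → ℝ, ContDiff ℝ 1 w →
        pCapacity n p {x ∈ Metric.closedBall x₀ ρ | w x = 0} (Metric.ball x₀ (2 * ρ)) *
            ((volume (Metric.ball x₀ (2 * ρ)))⁻¹ *
              ∫⁻ x in Metric.ball x₀ (2 * ρ), ENNReal.ofReal (|w x| ^ p)) ≤
          ENNReal.ofReal c *
            ∫⁻ x in Metric.ball x₀ (2 * ρ), ENNReal.ofReal (‖fderiv ℝ w x‖ ^ p) := by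
  have hp0 : 0 < p := by linarith
  obtain ⟨M, hM, hcut⟩ := exists_cutoff n
  set C : ℝ≥0∞ := 2 ^ p * 2 ^ (p - 1) * 2 ^ (p - 1) * (ENNReal.ofReal (4 * M) ^ p * 2 ^ n + 1)
    with hC
  have hCfin : C ≠ ∞ := by rw [hC]; finiteness
  refine ⟨C.toReal + 1, by positivity, fun x₀ ρ hρ w hw => ?_⟩
  have hCle : C ≤ ENNReal.ofReal (C.toReal + 1) := by
    rw [ENNReal.le_ofReal_iff_toReal_le hCfin (by positivity)]; linarith
  refine le_trans ?_ (mul_le_mul_left hCle _)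
  obtain ⟨η, h1, h2, h3, h4, h5, h6⟩ := hcut x₀ ρ hρ
  have hcap := cap_pointwise p hp M x₀ ρ η h1 h2 h3 h4 h5 h6 w hw
  have hpoin := poincare p hp w hw x₀ ρ hρ
  have hr1 : ∀ x, ENNReal.ofReal (|w x| ^ p) = ‖w x‖ₑ ^ p := fun x => by
    rw [← Real.norm_eq_abs, ofReal_norm_rpow _ _ hp0.le]
  have hr2 : ∀ x, ENNReal.ofReal (‖fderiv ℝ w x‖ ^ p) = ‖fderiv ℝ w x‖ₑ ^ p := fun x =>
    ofReal_norm_rpow _ _ hp0.le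
  simp only [hr1, hr2]
  set B := Metric.ball x₀ (2 * ρ) with hB
  set κ := pCapacity n p {x ∈ Metric.closedBall x₀ ρ | w x = 0} B with hκ
  set I := ∫⁻ x in B, ‖fderiv ℝ w x‖ₑ ^ p with hI
  have hvtop : volume B ≠ ∞ := measure_ball_lt_top.ne
  have hv0 : volume B ≠ 0 := (Metric.measure_ball_pos volume x₀ (by positivity)).ne'
  have hwm : Measurable fun x => ‖w x‖ₑ ^ p := hw.continuous.enorm.measurable.pow_const p
  have main : κ * ∫⁻ y in B, ‖w y‖ₑ ^ p ≤ volume B * (C * I) := by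
    calc κ * ∫⁻ y in B, ‖w y‖ₑ ^ p = ∫⁻ y in B, κ * ‖w y‖ₑ ^ p :=
          (lintegral_const_mul _ hwm).symm
      _ ≤ ∫⁻ y in B, 2 ^ p * 2 ^ (p - 1) * 2 ^ (p - 1) *
        (ENNReal.ofReal (M / ρ) ^ p * (∫⁻ x in B, ‖w x - w y‖ₑ ^ p) + I) :=
          lintegral_mono fun y => hcap (w y)
      _ = 2 ^ p * 2 ^ (p - 1) * 2 ^ (p - 1) * (ENNReal.ofReal (M / ρ) ^ p *
          (∫⁻ y in B, ∫⁻ x in B, ‖w x - w y‖ₑ ^ p) + I * volume B) := by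
          rw [lintegral_const_mul' _ _ (by finiteness), lintegral_add_right _ measurable_const,
            lintegral_const_mul' _ _ (by finiteness)]
          simp
      _ ≤ 2 ^ p * 2 ^ (p - 1) * 2 ^ (p - 1) * (ENNReal.ofReal (M / ρ) ^ p *
          (ENNReal.ofReal (4 * ρ) ^ p * (volume B * (2 ^ n * I))) + I * volume B) := by
          gcongr
      _ = volume B * (C * I) := by
          have hmm : ENNReal.ofReal (M / ρ) ^ p * ENNReal.ofReal (4 * ρ) ^ p =
              ENNReal.ofReal (4 * M) ^ p := by
            rw [← ENNReal.mul_rpow_of_nonneg _ _ hp0.le, ← ENNReal.ofReal_mul (by positivity)]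
            congr 2
            field_simp
          rw [hC, ← hmm]
          ring
  calc _ = (volume B)⁻¹ * (κ * ∫⁻ y in B, ‖w y‖ₑ ^ p) := by ring
    _ ≤ (volume B)⁻¹ * (volume B * (C * I)) := by gcongr
    _ = C * I := by rw [← mul_assoc, ENNReal.inv_mul_cancel hv0 hvtop, one_mul]
end

section
/- (Capacitary Sobolev inequality, for continuously differentiable functions.) Let n ≥ 2 and 1 < p < ∞, let x₀ ∈ ℝⁿ and ρ > 0, and let w : ℝⁿ → ℝ be continuously differentiable. Set K_ρ(w) := { x ∈ B̄(x₀,ρ) : w(x) = 0 }, and define κ := n/(n−p) if p < n and κ := 2 if p ≥ n. Then there exists a constant c depending only on n and p such that cap_p(K_ρ(w), B(x₀,2ρ)) · ( ⨍_{B(x₀,2ρ)} |w|^{κp} dx )^{1/κ} ≤ c ∫_{B(x₀,2ρ)} |Dw|^p dx, where ⨍ denotes the integral average. -/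
open MeasureTheory Set ENNReal

namespace CapSob

open Filter Topology Metric

abbrev Esp (n : ℕ) := EuclideanSpace ℝ (Fin n)

lemma vol_preimage_le {n : ℕ} (T : Esp n → Esp n) (s : Set (Esp n)) (L : NNReal)
    (hL : ∀ x ∈ s, ∀ y ∈ s, dist x y ≤ L * dist (T x) (T y)) (A : Set (Esp n)) :
    volume (T ⁻¹' A ∩ s) ≤ (L : ℝ≥0∞) ^ n * volume A := by
  have h1 : AntilipschitzWith L (s.domRestrict T) := by
    apply AntilipschitzWith.of_le_mul_dist
    intro x y
    exact hL x x.2 y y.2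
  have hfr : Module.finrank ℝ (Esp n) = n := by simp
  have hH := Measure.isAddLeftInvariant_eq_smul (volume : Measure (Esp n))
    (Measure.hausdorffMeasure (Module.finrank ℝ (Esp n)))
  have h2 := h1.hausdorffMeasure_preimage_le (d := Module.finrank ℝ (Esp n)) (by positivity) A
  have h3 : Subtype.val '' (s.domRestrict T ⁻¹' A) = T ⁻¹' A ∩ s := by
    ext x; simp [and_comm]
  have h4 := (isometry_subtype_coe (s := s)).hausdorffMeasure_image
    (d := Module.finrank ℝ (Esp n)) (Or.inl (by positivity)) (s.domRestrict T ⁻¹' A)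
  rw [h3] at h4
  rw [hH]
  simp only [Measure.smul_apply]
  rw [h4]
  rw [mul_smul_comm]
  gcongr
  refine h2.trans ?_
  rw [ENNReal.rpow_natCast, hfr]

lemma cov {n : ℕ} (T : Esp n → Esp n) (hT : Measurable T) (s t : Set (Esp n))
    (hst : MapsTo T s t) (L : NNReal)
    (hL : ∀ x ∈ s, ∀ y ∈ s, dist x y ≤ L * dist (T x) (T y))
    (f : Esp n → ℝ≥0∞) (hf : Measurable f) :
    ∫⁻ x in s, f (T x) ≤ (L : ℝ≥0∞) ^ n * ∫⁻ x in t, f x := by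
  have h1 : (volume.restrict s).map T ≤ ((L : ℝ≥0∞) ^ n) • (volume.restrict t) := by
    rw [Measure.le_iff]
    intro A hA
    rw [Measure.map_apply hT hA, Measure.restrict_apply (hT hA)]
    simp only [Measure.smul_apply, smul_eq_mul]
    rw [Measure.restrict_apply hA]
    refine le_trans (measure_mono ?_) (vol_preimage_le T s L hL (A ∩ t))
    intro x hx
    exact ⟨⟨hx.1, hst hx.2⟩, hx.2⟩
  calc ∫⁻ x in s, f (T x) = ∫⁻ x, f x ∂((volume.restrict s).map T) := by
        rw [lintegral_map hf hT]
    _ ≤ ∫⁻ x, f x ∂(((L : ℝ≥0∞) ^ n) • (volume.restrict t)) := lintegral_mono' h1 le_rfl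
    _ = _ := by rw [lintegral_smul_measure]; rfl

lemma pointwise_mv {n : ℕ} {p : ℝ} (hp : 1 < p) (w : Esp n → ℝ) (hw : ContDiff ℝ 1 w)
    (x y : Esp n) :
    ‖w y - w x‖ₑ ^ p ≤ ‖y - x‖ₑ ^ p *
      ∫⁻ t in Ioc (0 : ℝ) 1, ‖fderiv ℝ w ((1 - t) • x + t • y)‖ₑ ^ p := by
  have hp0 : 0 < p := by linarith
  have hγ : Continuous fun t : ℝ => (1 - t) • x + t • y := by fun_prop
  have hD : Continuous (fderiv ℝ w) := hw.continuous_fderiv (by norm_num)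
  have hder : ∀ t : ℝ, HasDerivAt (fun t : ℝ => w ((1 - t) • x + t • y))
      (fderiv ℝ w ((1 - t) • x + t • y) (y - x)) t := by
    intro t
    have h1 : HasDerivAt (fun t : ℝ => (1 - t) • x + t • y) (y - x) t := by
      have ha : HasDerivAt (fun t : ℝ => (1 - t) • x) ((-1 : ℝ) • x) t :=
        ((hasDerivAt_id t).const_sub 1).smul_const x
      have hb : HasDerivAt (fun t : ℝ => t • y) ((1 : ℝ) • y) t :=
        (hasDerivAt_id t).smul_const y
      have he : y - x = (-1 : ℝ) • x + (1 : ℝ) • y := by module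
      rw [he]
      exact ha.add hb
    exact ((hw.differentiable (by norm_num)) _).hasFDerivAt.comp_hasDerivAt t h1
  have hftc : w y - w x = ∫ t in (0 : ℝ)..1, fderiv ℝ w ((1 - t) • x + t • y) (y - x) := by
    rw [intervalIntegral.integral_eq_sub_of_hasDerivAt (fun t _ => hder t)]
    · simp
    · apply Continuous.intervalIntegrable
      exact (hD.comp hγ).clm_apply continuous_const
  have h2 : ‖w y - w x‖ₑ ≤ ‖y - x‖ₑ * ∫⁻ t in Ioc (0 : ℝ) 1, ‖fderiv ℝ w ((1 - t) • x + t • y)‖ₑ := by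
    rw [hftc, intervalIntegral.integral_of_le zero_le_one]
    refine (enorm_integral_le_lintegral_enorm _).trans ?_
    rw [← lintegral_const_mul' _ _ (by simp)]
    apply lintegral_mono
    intro t
    show _ ≤ ‖y - x‖ₑ * _
    rw [mul_comm]
    exact ContinuousLinearMap.le_opENorm _ _
  refine (ENNReal.rpow_le_rpow h2 hp0.le).trans ?_
  rw [ENNReal.mul_rpow_of_nonneg _ _ hp0.le]
  gcongr
  have : IsProbabilityMeasure (volume.restrict (Ioc (0 : ℝ) 1)) := ⟨by simp⟩
  have h3 := eLpNorm_le_eLpNorm_of_exponent_le (μ := volume.restrict (Ioc (0 : ℝ) 1))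
    (p := 1) (q := ENNReal.ofReal p) (by simpa using hp.le)
    (hD.comp hγ).aestronglyMeasurable
  rw [eLpNorm_one_eq_lintegral_enorm, eLpNorm_eq_lintegral_rpow_enorm_toReal (by simpa using hp0)
    (by simp), ENNReal.toReal_ofReal hp0.le] at h3
  have h4 := ENNReal.rpow_le_rpow h3 hp0.le
  rw [← ENNReal.rpow_mul, one_div_mul_cancel hp0.ne', ENNReal.rpow_one] at h4
  exact h4

lemma half_int {n : ℕ} (G : Esp n → ℝ≥0∞) (hG : Measurable G) (y : Esp n)
    (hy : y ∈ ball (0 : Esp n) 1) (t : ℝ) (h0 : 1 / 2 ≤ t) (h1 : t ≤ 1) :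
    ∫⁻ x in ball (0 : Esp n) 1, G ((1 - t) • y + t • x) ≤ 2 ^ n * ∫⁻ x in ball (0 : Esp n) 1, G x := by
  have := cov (fun x => (1 - t) • y + t • x) (by fun_prop) (ball (0 : Esp n) 1) (ball 0 1)
    ?_ 2 ?_ G hG
  · simpa using this
  · intro x hx
    exact (convex_ball (0 : Esp n) 1) hy hx (by linarith) (by linarith) (by ring)
  · intro x _ z _
    rw [dist_add_left, dist_smul₀, Real.norm_eq_abs, abs_of_nonneg (by linarith)]
    have : 0 ≤ dist x z := dist_nonneg
    simp only [NNReal.coe_ofNat]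
    nlinarith

lemma poincare (n : ℕ) {p : ℝ} (hp : 1 < p) : ∃ C : ℝ≥0∞, C ≠ ∞ ∧
    ∀ w : Esp n → ℝ, ContDiff ℝ 1 w → ∃ a : ℝ,
      ∫⁻ x in ball (0 : Esp n) 1, ‖w x - a‖ₑ ^ p ≤
        C * ∫⁻ x in ball (0 : Esp n) 1, ‖fderiv ℝ w x‖ₑ ^ p := by
  have hp0 : 0 < p := by linarith
  set B := ball (0 : Esp n) 1 with hB
  have hBm : MeasurableSet B := measurableSet_ball
  have hB0 : volume B ≠ 0 := (measure_ball_pos _ _ one_pos).ne'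
  have hBt : volume B ≠ ∞ := measure_ball_lt_top.ne
  refine ⟨2 ^ p * 2 ^ n, by finiteness, ?_⟩
  intro w hw
  have hD : Continuous (fderiv ℝ w) := hw.continuous_fderiv (by norm_num)
  set G : Esp n → ℝ≥0∞ := fun x => ‖fderiv ℝ w x‖ₑ ^ p with hGdef
  have hGm : Measurable G := by
    have : Measurable fun x => ‖fderiv ℝ w x‖ₑ := hD.enorm.measurable
    exact this.pow_const p
  have hwm : Measurable w := hw.continuous.measurable
  have hFm : Measurable (fun q : Esp n × Esp n => ‖w q.2 - w q.1‖ₑ ^ p) := by fun_prop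
  have hdouble : ∫⁻ y in B, ∫⁻ x in B, ‖w x - w y‖ₑ ^ p ≤
      volume B * (2 ^ p * 2 ^ n * ∫⁻ x in B, G x) := by
    have hG3 : Measurable (fun q : (Esp n × Esp n) × ℝ => G ((1 - q.2) • q.1.1 + q.2 • q.1.2)) := by
      apply hGm.comp; fun_prop
    calc ∫⁻ y in B, ∫⁻ x in B, ‖w x - w y‖ₑ ^ p
        ≤ ∫⁻ y in B, ∫⁻ x in B, 2 ^ p * ∫⁻ t in Ioc (0 : ℝ) 1, G ((1 - t) • y + t • x) := by
          apply setLIntegral_mono' hBm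
          intro y hy
          apply setLIntegral_mono' hBm
          intro x hx
          refine (pointwise_mv hp w hw y x).trans ?_
          gcongr
          have h1 : ‖x - y‖ ≤ 2 := by
            have := norm_sub_le x y
            rw [hB, mem_ball_zero_iff] at hx hy
            linarith
          rw [← ofReal_norm]
          exact (ENNReal.ofReal_le_ofReal h1).trans (by simp)
      _ = 2 ^ p * ∫⁻ t in Ioc (0 : ℝ) 1, ∫⁻ y in B, ∫⁻ x in B, G ((1 - t) • y + t • x) := by
          have e1 : ∀ y, ∫⁻ x in B, 2 ^ p * ∫⁻ t in Ioc (0 : ℝ) 1, G ((1 - t) • y + t • x)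
              = 2 ^ p * ∫⁻ t in Ioc (0 : ℝ) 1, ∫⁻ x in B, G ((1 - t) • y + t • x) := by
            intro y
            rw [lintegral_const_mul' _ _ (by finiteness)]
            congr 1
            rw [lintegral_lintegral_swap]
            apply Measurable.aemeasurable
            apply hGm.comp; fun_prop
          simp_rw [e1]
          rw [lintegral_const_mul' _ _ (by finiteness)]
          congr 1
          rw [lintegral_lintegral_swap]
          apply Measurable.aemeasurable
          have : Measurable (fun q : (Esp n × ℝ) × Esp n => G ((1 - q.1.2) • q.1.1 + q.1.2 • q.2)) := by
            apply hGm.comp; fun_prop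
          exact this.lintegral_prod_right'
      _ ≤ 2 ^ p * ∫⁻ t in Ioc (0 : ℝ) 1, volume B * (2 ^ n * ∫⁻ x in B, G x) := by
          gcongr 2 ^ p * ?_
          apply setLIntegral_mono' measurableSet_Ioc
          intro t ht
          have key : ∀ t : ℝ, 1 / 2 ≤ t → t ≤ 1 → 
              ∫⁻ y in B, ∫⁻ x in B, G ((1 - t) • y + t • x) ≤ volume B * (2 ^ n * ∫⁻ x in B, G x) := by
            intro t h0 h1
            calc _ ≤ ∫⁻ y in B, 2 ^ n * ∫⁻ x in B, G x := by
                  apply setLIntegral_mono' hBm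
                  intro y hy
                  exact half_int G hGm y hy t h0 h1
              _ = _ := by rw [setLIntegral_const, mul_comm]
          rcases le_total (1 / 2) t with h | h
          · exact key t h ht.2
          · rw [lintegral_lintegral_swap]
            · have := key (1 - t) (by linarith) (by linarith [ht.1])
              convert this using 6
              rw [add_comm]; simp
            · apply Measurable.aemeasurable
              apply hGm.comp; fun_prop
      _ = _ := by simp; ring
  obtain ⟨y, hy, hay⟩ := exists_le_setLAverage (μ := volume) (s := B)
    (f := fun y => ∫⁻ x in B, ‖w x - w y‖ₑ ^ p) hB0 hBt
    (hFm.lintegral_prod_right' (ν := volume.restrict B)).aemeasurable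
  refine ⟨w y, hay.trans ?_⟩
  rw [setLAverage_eq]
  refine ENNReal.div_le_of_le_mul ?_
  rw [mul_comm]
  exact hdouble


section Refl
variable {V : Type*} [NormedAddCommGroup V] [InnerProductSpace ℝ V]

open Classical in
noncomputable def refl1 (x : V) : V := if ‖x‖ ≤ 1 then x else (1 / ‖x‖) ^ 2 • x

noncomputable def refl2 (x : V) : V := (3 / 2 : ℝ) • refl1 x - (1 / 2 : ℝ) • x

lemma refl1_le {x : V} (h : ‖x‖ ≤ 1) : refl1 x = x := by simp [refl1, h]

lemma refl1_ge {x : V} (h : 1 ≤ ‖x‖) : refl1 x = (1 / ‖x‖) ^ 2 • x := by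
  unfold refl1
  split_ifs with h1
  · have : ‖x‖ = 1 := le_antisymm h1 h
    simp [this]
  · rfl

lemma refl2_le {x : V} (h : ‖x‖ ≤ 1) : refl2 x = x := by
  rw [refl2, refl1_le h]; module

lemma dist_refl1_ge {x y : V} (hx : 1 ≤ ‖x‖) (hy : 1 ≤ ‖y‖) :
    ‖x‖ * ‖y‖ * dist (refl1 x) (refl1 y) = dist x y := by
  have hx0 : x ≠ 0 := by rintro rfl; simp at hx; linarith
  have hy0 : y ≠ 0 := by rintro rfl; simp at hy; linarith
  rw [refl1_ge hx, refl1_ge hy, dist_div_norm_sq_smul hx0 hy0]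
  have := norm_pos_iff.2 hx0
  have := norm_pos_iff.2 hy0
  field_simp

lemma refl1_mixed {x y : V} (hx : ‖x‖ ≤ 1) (hy : 1 ≤ ‖y‖) :
    dist (refl1 x) (refl1 y) ≤ dist x y := by
  rw [refl1_le hx, refl1_ge hy, dist_eq_norm, dist_eq_norm]
  apply le_of_sq_le_sq _ (norm_nonneg _)
  rw [norm_sub_sq_real, norm_sub_sq_real, inner_smul_right, norm_smul]
  have hin : inner ℝ x y ≤ ‖y‖ := (real_inner_le_norm x y).trans (by nlinarith [norm_nonneg y])
  have hs : 0 < ‖y‖ := by linarith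
  set s := ‖y‖
  set i := inner ℝ x y
  simp only [norm_pow, norm_div, norm_one, Real.norm_eq_abs, abs_of_pos hs]
  set r := 1 / s with hr
  have hrs : r * s = 1 := by rw [hr]; field_simp
  have hr0 : 0 < r := by positivity
  have hr1 : r ≤ 1 := by nlinarith
  have e1 : (r ^ 2 * s) ^ 2 = r ^ 2 := by
    calc (r ^ 2 * s) ^ 2 = r ^ 2 * (r * s) ^ 2 := by ring
      _ = r ^ 2 := by rw [hrs]; ring
  rw [e1]
  have h2 : 0 ≤ 1 - r ^ 2 := by nlinarith
  have h3 := mul_le_mul_of_nonneg_left hin h2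
  have e2 : (1 - r ^ 2) * s = s - r := by
    calc (1 - r ^ 2) * s = s - r * (r * s) := by ring
      _ = s - r := by rw [hrs]; ring
  have h4 : 0 ≤ (s - r) * (s + r - 2) := by
    apply mul_nonneg
    · linarith
    · nlinarith [sq_nonneg (s - 1)]
  nlinarith

lemma refl1_lip (x y : V) : dist (refl1 x) (refl1 y) ≤ dist x y := by
  rcases le_total ‖x‖ 1 with hx | hx <;> rcases le_total ‖y‖ 1 with hy | hy
  · rw [refl1_le hx, refl1_le hy]
  · exact refl1_mixed hx hy
  · rw [dist_comm, dist_comm x]; exact refl1_mixed hy hx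
  · have := dist_refl1_ge hx hy
    have h1 : 1 ≤ ‖x‖ * ‖y‖ := by nlinarith
    nlinarith [dist_nonneg (x := refl1 x) (y := refl1 y)]

lemma refl2_lip (x y : V) : dist (refl2 x) (refl2 y) ≤ 2 * dist x y := by
  have h := refl1_lip x y
  rw [dist_eq_norm, dist_eq_norm] at *
  have e : refl2 x - refl2 y = (3 / 2 : ℝ) • (refl1 x - refl1 y) - (1 / 2 : ℝ) • (x - y) := by
    simp only [refl2]; module
  rw [e]
  refine (norm_sub_le _ _).trans ?_
  rw [norm_smul, norm_smul]
  norm_num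
  linarith

lemma refl1_anti {x y : V} (hx : 1 ≤ ‖x‖) (hy : 1 ≤ ‖y‖) (hx' : ‖x‖ ≤ 5 / 4) (hy' : ‖y‖ ≤ 5 / 4) :
    dist x y ≤ 25 / 16 * dist (refl1 x) (refl1 y) := by
  rw [← dist_refl1_ge hx hy]
  gcongr
  nlinarith

lemma refl2_anti {x y : V} (hx : 1 ≤ ‖x‖) (hy : 1 ≤ ‖y‖) (hx' : ‖x‖ ≤ 5 / 4) (hy' : ‖y‖ ≤ 5 / 4) :
    dist x y ≤ 3 * dist (refl2 x) (refl2 y) := by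
  have h := refl1_anti hx hy hx' hy'
  rw [dist_eq_norm, dist_eq_norm] at *
  have e : (3 / 2 : ℝ) • (refl1 x - refl1 y) = (refl2 x - refl2 y) + (1 / 2 : ℝ) • (x - y) := by
    simp only [refl2]; module
  have h2 := norm_add_le (refl2 x - refl2 y) ((1 / 2 : ℝ) • (x - y))
  rw [← e, norm_smul, norm_smul] at h2
  norm_num at h2
  linarith [norm_nonneg (x - y)]

lemma refl1_norm (x : V) : ‖refl1 x‖ ≤ 1 := by
  rcases le_total ‖x‖ 1 with hx | hx
  · rw [refl1_le hx]; exact hx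
  · rw [refl1_ge hx, norm_smul]
    have hs : 0 < ‖x‖ := by linarith
    simp only [norm_pow, norm_div, norm_one, norm_norm]
    have : (1 / ‖x‖) ^ 2 * ‖x‖ = 1 / ‖x‖ := by field_simp
    rw [this, div_le_one hs]; exact hx

lemma refl2_norm {x : V} (hx' : ‖x‖ ≤ 5 / 4) : ‖refl2 x‖ ≤ 1 := by
  rcases le_total ‖x‖ 1 with hx | hx
  · rw [refl2_le hx]; exact hx
  · have hs : 0 < ‖x‖ := by linarith
    have e : refl2 x = (3 / 2 * (1 / ‖x‖) ^ 2 - 1 / 2) • x := by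
      rw [refl2, refl1_ge hx]; module
    rw [e, norm_smul, Real.norm_eq_abs, ← abs_of_pos hs, ← abs_mul, abs_of_pos hs, abs_le]
    set s := ‖x‖
    have e2 : (3 / 2 * (1 / s) ^ 2 - 1 / 2) * s = (3 / s - s) / 2 := by field_simp
    rw [e2]
    have h1 : 3 / s ≤ 3 := by rw [div_le_iff₀ hs]; linarith
    have h2 : 0 ≤ 3 / s := by positivity
    constructor <;> linarith

lemma refl1_continuous : Continuous (refl1 : V → V) :=
  (LipschitzWith.of_dist_le_mul (K := 1) (fun x y => by simpa using refl1_lip x y)).continuous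

lemma refl2_continuous : Continuous (refl2 : V → V) :=
  (LipschitzWith.of_dist_le_mul (K := 2) (fun x y => by simpa using refl2_lip x y)).continuous

lemma refl1_contDiffAt {x : V} (h : ‖x‖ ≠ 1) : ContDiffAt ℝ 1 refl1 x := by
  rcases lt_or_gt_of_ne h with h | h
  · have : refl1 =ᶠ[𝓝 x] id := by
      have : ∀ᶠ y in 𝓝 x, ‖y‖ < 1 := (continuous_norm.tendsto x).eventually_lt_const h
      filter_upwards [this] with y hy
      exact refl1_le hy.le
    exact contDiffAt_id.congr_of_eventuallyEq this
  · have : refl1 =ᶠ[𝓝 x] fun y => (1 / ‖y‖) ^ 2 • y := by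
      have : ∀ᶠ y in 𝓝 x, 1 < ‖y‖ := (continuous_norm.tendsto x).eventually_const_lt h
      filter_upwards [this] with y hy
      exact refl1_ge hy.le
    have hx0 : x ≠ 0 := by rintro rfl; simp at h; linarith
    refine ContDiffAt.congr_of_eventuallyEq ?_ this
    exact ((contDiffAt_const.div (contDiffAt_norm ℝ hx0) (norm_ne_zero_iff.2 hx0)).pow 2).smul
      contDiffAt_id

lemma refl2_contDiffAt {x : V} (h : ‖x‖ ≠ 1) : ContDiffAt ℝ 1 refl2 x :=
  ((refl1_contDiffAt h).const_smul (3 / 2 : ℝ)).sub (contDiffAt_id.const_smul (1 / 2 : ℝ))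

noncomputable def ext (u : V → ℝ) (x : V) : ℝ := 3 * u (refl1 x) - 2 * u (refl2 x)

lemma ext_le (u : V → ℝ) {x : V} (h : ‖x‖ ≤ 1) : ext u x = u x := by
  rw [ext, refl1_le h, refl2_le h]; ring

lemma contDiff_of_strict {f : V → ℝ} (h : ∀ x, ∃ f' : V →L[ℝ] ℝ, HasStrictFDerivAt f f' x) : ContDiff ℝ 1 f := by
  choose f' hf' using h
  have he : fderiv ℝ f = f' := funext fun x => (hf' x).hasFDerivAt.fderiv
  rw [contDiff_one_iff_fderiv]
  refine ⟨fun x => (hf' x).hasFDerivAt.differentiableAt, ?_⟩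
  rw [he, continuous_iff_continuousAt]
  intro x
  rw [Metric.continuousAt_iff']
  intro ε hε
  have h1 := (hasStrictFDerivAt_iff_isLittleO.1 (hf' x)).def (half_pos hε)
  rw [nhds_prod_eq] at h1
  obtain ⟨s, hs, t, ht, hst⟩ := Filter.eventually_prod_iff.1 h1
  have hu : ∀ᶠ y in 𝓝 x, s y ∧ t y := hs.and (by exact ht)
  have hu2 := hu.eventually_nhds
  filter_upwards [hu2] with y hy
  rw [dist_eq_norm]
  refine lt_of_le_of_lt ?_ (half_lt_self hε)
  have h5 : HasFDerivAt (fun z => f z - f' x z) (f' y - f' x) y :=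
    (hf' y).hasFDerivAt.sub (f' x).hasFDerivAt
  refine h5.le_of_lip' (half_pos hε).le ?_
  have hy0 := hy.self_of_nhds
  filter_upwards [hy] with z hz
  have := hst hz.1 hy0.2
  simp only [map_sub] at this
  have e : (f z - f' x z) - (f y - f' x y) = f z - f y - (f' x z - f' x y) := by ring
  show ‖(f z - f' x z) - (f y - f' x y)‖ ≤ _
  rw [e]
  exact this

lemma ext_contDiff {u : V → ℝ} (hu : ContDiff ℝ 1 u) : ContDiff ℝ 1 (ext u) := by
  apply contDiff_of_strict
  intro x
  by_cases h : ‖x‖ = 1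
  · refine ⟨fderiv ℝ u x, ?_⟩
    have hs : HasStrictFDerivAt u (fderiv ℝ u x) x := hu.contDiffAt.hasStrictFDerivAt (by norm_num)
    rw [hasStrictFDerivAt_iff_isLittleO] at hs ⊢
    have key : ∀ (T : V → V), Continuous T → T x = x → (∀ a b, dist (T a) (T b) ≤ 2 * dist a b) →
        (fun p : V × V => u (T p.1) - u (T p.2) - fderiv ℝ u x (T p.1 - T p.2)) =o[𝓝 (x, x)]
          fun p : V × V => p.1 - p.2 := by
      intro T hT hTx hL
      have ht : Tendsto (fun p : V × V => (T p.1, T p.2)) (𝓝 (x, x)) (𝓝 (x, x)) := by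
        have : Continuous (fun p : V × V => (T p.1, T p.2)) := by fun_prop
        have h2 := this.tendsto (x, x)
        simpa [hTx] using h2
      refine (hs.comp_tendsto ht).trans_isBigO ?_
      refine Asymptotics.IsBigO.of_bound 2 (Eventually.of_forall fun p => ?_)
      have := hL p.1 p.2
      rwa [dist_eq_norm, dist_eq_norm] at this
    have k1 := key refl1 refl1_continuous (refl1_le h.le)
      (fun a b => (refl1_lip a b).trans (by linarith [dist_nonneg (x := a) (y := b)]))
    have k2 := key refl2 refl2_continuous (refl2_le h.le) refl2_lip
    refine ((k1.const_mul_left 3).sub (k2.const_mul_left 2)).congr_left ?_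
    intro p
    have e : p.1 - p.2 = (3 : ℝ) • (refl1 p.1 - refl1 p.2) - (2 : ℝ) • (refl2 p.1 - refl2 p.2) := by
      simp only [refl2]; module
    rw [e]
    simp only [ext, map_sub, map_smul, smul_eq_mul]
    ring
  · have : ContDiffAt ℝ 1 (ext u) x :=
      (contDiffAt_const.mul (hu.contDiffAt.comp x (refl1_contDiffAt h))).sub
        (contDiffAt_const.mul (hu.contDiffAt.comp x (refl2_contDiffAt h)))
    exact ⟨_, this.hasStrictFDerivAt (by norm_num)⟩

lemma ext_fderiv_le {u : V → ℝ} (hu : ContDiff ℝ 1 u) (x : V) :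
    ‖fderiv ℝ (ext u) x‖ ≤ 4 * (‖fderiv ℝ u (refl1 x)‖ + ‖fderiv ℝ u (refl2 x)‖) := by
  have hd : HasFDerivAt (ext u) (fderiv ℝ (ext u) x) x :=
    (((ext_contDiff hu).differentiable (by norm_num)) x).hasFDerivAt
  apply _root_.le_of_forall_pos_le_add
  intro ε hε
  have key : ∀ (T : V → V), Continuous T → ∀ δ > 0,
      ∀ᶠ y in 𝓝 x, ‖u (T y) - u (T x)‖ ≤ (‖fderiv ℝ u (T x)‖ + δ) * ‖T y - T x‖ := by
    intro T hT δ hδ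
    have h1 := ((hasFDerivAt_iff_isLittleO.1
      ((hu.differentiable (by norm_num)) (T x)).hasFDerivAt)).def hδ
    have h2 := (hT.tendsto x).eventually h1
    filter_upwards [h2] with y hy
    have h3 := (fderiv ℝ u (T x)).le_opNorm (T y - T x)
    have h4 : u (T y) - u (T x) = (u (T y) - u (T x) - fderiv ℝ u (T x) (T y - T x))
      + fderiv ℝ u (T x) (T y - T x) := by ring
    rw [h4]
    refine (norm_add_le _ _).trans ?_
    linarith
  refine hd.le_of_lip' (by positivity) ?_
  filter_upwards [key refl1 refl1_continuous (ε / 7) (by positivity),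
    key refl2 refl2_continuous (ε / 7) (by positivity)] with y h1 h2
  have l1 := refl1_lip y x
  have l2 := refl2_lip y x
  rw [dist_eq_norm, dist_eq_norm] at l1 l2
  have h1' := h1.trans (mul_le_mul_of_nonneg_left l1 (by positivity))
  have h2' := h2.trans (mul_le_mul_of_nonneg_left l2 (by positivity))
  have e : ext u y - ext u x = 3 * (u (refl1 y) - u (refl1 x)) - 2 * (u (refl2 y) - u (refl2 x)) := by
    simp only [ext]; ring
  rw [e]
  refine (norm_sub_le _ _).trans ?_
  rw [norm_mul, norm_mul]
  norm_num at h1' h2' ⊢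
  have := mul_nonneg (norm_nonneg (fderiv ℝ u (refl1 x))) (norm_nonneg (y - x))
  nlinarith

end Refl


lemma int_refl_le {n : ℕ} (T : Esp n → Esp n) (hT : Continuous T) (h1 : ∀ x, ‖x‖ ≤ 1 → T x = x)
    (h2 : ∀ x : Esp n, ‖x‖ ≤ 5 / 4 → ‖T x‖ ≤ 1)
    (h3 : ∀ x y : Esp n, 1 ≤ ‖x‖ → 1 ≤ ‖y‖ → ‖x‖ ≤ 5 / 4 → ‖y‖ ≤ 5 / 4 →
      dist x y ≤ 3 * dist (T x) (T y)) (H : Esp n → ℝ≥0∞) (hH : Measurable H) :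
    ∫⁻ x in closedBall (0 : Esp n) (5 / 4), H (T x) ≤
      (1 + 3 ^ n) * ∫⁻ x in closedBall (0 : Esp n) 1, H x := by
  have hsub : closedBall (0 : Esp n) (5 / 4) ⊆
      closedBall (0 : Esp n) 1 ∪ {x | 1 ≤ ‖x‖ ∧ ‖x‖ ≤ 5 / 4} := by
    intro x hx
    rw [mem_closedBall_zero_iff] at hx
    rcases le_total ‖x‖ 1 with h | h
    · left; simpa using h
    · right; exact ⟨h, hx⟩
  refine (lintegral_mono_set hsub).trans ((lintegral_union_le _ _ _).trans ?_)
  rw [add_mul, one_mul]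
  gcongr ?_ + ?_
  · apply le_of_eq
    apply setLIntegral_congr_fun measurableSet_closedBall
    intro x hx
    rw [mem_closedBall_zero_iff] at hx
    simp only [h1 x hx]
  · have := cov T hT.measurable {x | 1 ≤ ‖x‖ ∧ ‖x‖ ≤ 5 / 4} (closedBall (0 : Esp n) 1)
      (fun x hx => by simpa using h2 x hx.2) 3
      (fun x hx y hy => by simpa using h3 x y hx.1 hy.1 hx.2 hy.2) H hH
    simpa using this

lemma four_rpow {p : ℝ} (hp : 1 ≤ p) (a b c d : ℝ≥0∞) :
    ((a + b) + (c + d)) ^ p ≤ (2 ^ (p - 1) * 2 ^ (p - 1)) * ((a ^ p + b ^ p) + (c ^ p + d ^ p)) := by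
  refine (ENNReal.rpow_add_le_mul_rpow_add_rpow _ _ hp).trans ?_
  rw [mul_assoc]
  gcongr
  rw [mul_add]
  gcongr
  · exact ENNReal.rpow_add_le_mul_rpow_add_rpow _ _ hp
  · exact ENNReal.rpow_add_le_mul_rpow_add_rpow _ _ hp

lemma ball_eq_closedBall {n : ℕ} (H : Esp n → ℝ≥0∞) :
    ∫⁻ x in closedBall (0 : Esp n) 1, H x = ∫⁻ x in ball (0 : Esp n) 1, H x := by
  apply setLIntegral_congr
  have h := Measure.addHaar_sphere_of_ne_zero (volume : Measure (Esp n)) 0 (one_ne_zero (α := ℝ))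
  rw [← ball_union_sphere]
  exact union_ae_eq_left_of_ae_eq_empty (ae_eq_empty.2 h)

lemma eLpNorm_restr {n : ℕ} {F : Type*} [NormedAddCommGroup F] (f : Esp n → F) (s : Set (Esp n))
    (h : ∀ x, x ∉ s → f x = 0) (p : ℝ≥0∞) :
    eLpNorm f p (volume.restrict s) = eLpNorm f p volume := by
  apply eLpNorm_restrict_eq_of_support_subset
  intro x hx
  by_contra hc
  exact hx (h x hc)

lemma sobolev {n : ℕ} (hn : 2 ≤ n) {p q r : ℝ} (hp : 1 < p) (hq : 0 < q) (hr1 : 1 ≤ r) (hrp : r ≤ p)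
    (hqr : q⁻¹ = r⁻¹ - (n : ℝ)⁻¹) : ∃ C : ℝ≥0∞, C ≠ ∞ ∧ ∀ u : Esp n → ℝ, ContDiff ℝ 1 u →
    (∫⁻ x in ball (0 : Esp n) 1, ‖u x‖ₑ ^ q) ^ (1 / q) ≤
      C * (∫⁻ x in ball (0 : Esp n) 1, (‖u x‖ₑ ^ p + ‖fderiv ℝ u x‖ₑ ^ p)) ^ (1 / p) := by
  have hp0 : 0 < p := by linarith
  have hr0 : 0 < r := by linarith
  set χ : ContDiffBump (0 : Esp n) := ⟨1, 5 / 4, by norm_num, by norm_num⟩ with hχ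
  have hχs : ContDiff ℝ 1 χ := χ.contDiff
  have hχD : Continuous (fderiv ℝ χ) := hχs.continuous_fderiv (by norm_num)
  obtain ⟨M, hM⟩ := (χ.hasCompactSupport.fderiv (𝕜 := ℝ)).exists_bound_of_continuous hχD
  have hM0 : 0 ≤ M := (norm_nonneg _).trans (hM 0)
  set A := closedBall (0 : Esp n) (5 / 4) with hA
  have hχA : tsupport χ = A := χ.tsupport_eq
  set K : ℝ≥0∞ := ENNReal.ofReal (4 + 3 * M) ^ p * (2 ^ (p - 1) * 2 ^ (p - 1)) with hK
  have hKt : K ≠ ∞ := by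
    have : 0 ≤ p - 1 := by linarith
    rw [hK]; finiteness
  set rr : NNReal := r.toNNReal
  set qq : NNReal := q.toNNReal
  have hrr : (rr : ℝ) = r := Real.coe_toNNReal _ hr0.le
  have hqq : (qq : ℝ) = q := Real.coe_toNNReal _ hq.le
  set C1 : NNReal := eLpNormLESNormFDerivOfEqInnerConst (volume : Measure (Esp n)) (rr : ℝ) with hC1
  have hexp : 0 ≤ 1 / r - 1 / p := by
    have := one_div_le_one_div_of_le hr0 hrp
    linarith
  refine ⟨C1 * (K * (2 * (1 + 3 ^ n))) ^ (1 / p) * volume A ^ (1 / r - 1 / p), ?_, ?_⟩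
  · have : volume A ≠ ∞ := measure_closedBall_lt_top.ne
    have : 0 ≤ 1 / p := by positivity
    finiteness
  intro u hu
  set v : Esp n → ℝ := fun x => χ x * ext u x with hv
  have hext := ext_contDiff hu
  have hvs : ContDiff ℝ 1 v := hχs.mul hext
  have hvc : HasCompactSupport v := χ.hasCompactSupport.mul_right
  have hDv : Continuous (fderiv ℝ v) := hvs.continuous_fderiv (by norm_num)
  have hsupp : ∀ x, x ∉ A → fderiv ℝ v x = 0 := by
    have hsub : Function.support (fderiv ℝ v) ⊆ A := by
      refine (support_fderiv_subset ℝ).trans ?_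
      rw [← hχA]
      exact closure_mono (Function.support_mul_subset_left _ _)
    intro x hx
    by_contra hc
    exact hx (hsub hc)
  have hGNS := eLpNorm_le_eLpNorm_fderiv_of_eq_inner (volume : Measure (Esp n)) hvs hvc
    (p := rr) (p' := qq) (by rw [← NNReal.coe_le_coe, hrr]; simpa using hr1)
    (by simp; omega) (by rw [hqq, NNReal.coe_inv, hrr]; simpa using hqr)
  set H : Esp n → ℝ≥0∞ := fun x => ‖u x‖ₑ ^ p + ‖fderiv ℝ u x‖ₑ ^ p with hH
  have hDu : Continuous (fderiv ℝ u) := hu.continuous_fderiv (by norm_num)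
  have hHm : Measurable H := by
    have h1 : Measurable fun x => ‖fderiv ℝ u x‖ₑ := hDu.enorm.measurable
    have h2 : Measurable fun x => ‖u x‖ₑ := hu.continuous.enorm.measurable
    exact (h2.pow_const p).add (h1.pow_const p)
  have hpt : ∀ x, ‖fderiv ℝ v x‖ₑ ^ p ≤ K * (H (refl1 x) + H (refl2 x)) := by
    intro x
    have h1 : ‖fderiv ℝ v x‖ ≤ (4 + 3 * M) * ((‖u (refl1 x)‖ + ‖fderiv ℝ u (refl1 x)‖) +
        (‖u (refl2 x)‖ + ‖fderiv ℝ u (refl2 x)‖)) := by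
      have e : fderiv ℝ v x = χ x • fderiv ℝ (ext u) x + ext u x • fderiv ℝ χ x :=
        fderiv_fun_mul ((hχs.differentiable (by norm_num)) x) ((hext.differentiable (by norm_num)) x)
      rw [e]
      refine (norm_add_le _ _).trans ?_
      rw [norm_smul, norm_smul]
      have a1 : ‖χ x‖ ≤ 1 := by
        rw [Real.norm_eq_abs, abs_of_nonneg χ.nonneg]; exact χ.le_one
      have a2 := ext_fderiv_le hu x
      have a3 : ‖ext u x‖ ≤ 3 * (‖u (refl1 x)‖ + ‖u (refl2 x)‖) := by
        rw [ext]
        refine (norm_sub_le _ _).trans ?_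
        rw [norm_mul, norm_mul]
        norm_num
        linarith [abs_nonneg (u (refl2 x))]
      have a4 := hM x
      have a5 := mul_le_mul a1 a2 (norm_nonneg _) zero_le_one
      have a6 := mul_le_mul a3 a4 (norm_nonneg _) (by positivity)
      have b1 := norm_nonneg (u (refl1 x))
      have b2 := norm_nonneg (u (refl2 x))
      have b3 := mul_nonneg hM0 (norm_nonneg (fderiv ℝ u (refl1 x)))
      have b4 := mul_nonneg hM0 (norm_nonneg (fderiv ℝ u (refl2 x)))
      nlinarith
    have h2 : ‖fderiv ℝ v x‖ₑ ≤ ENNReal.ofReal (4 + 3 * M) * ((‖u (refl1 x)‖ₑ +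
        ‖fderiv ℝ u (refl1 x)‖ₑ) + (‖u (refl2 x)‖ₑ + ‖fderiv ℝ u (refl2 x)‖ₑ)) := by
      simp only [← ofReal_norm]
      rw [← ENNReal.ofReal_add (by positivity) (by positivity),
        ← ENNReal.ofReal_add (by positivity) (by positivity),
        ← ENNReal.ofReal_add (by positivity) (by positivity),
        ← ENNReal.ofReal_mul (by positivity)]
      exact ENNReal.ofReal_le_ofReal h1
    refine (ENNReal.rpow_le_rpow h2 hp0.le).trans ?_
    rw [ENNReal.mul_rpow_of_nonneg _ _ hp0.le, hK, mul_assoc]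
    gcongr
    exact four_rpow hp.le _ _ _ _
  have hInt : ∫⁻ x in A, ‖fderiv ℝ v x‖ₑ ^ p ≤
      K * (2 * (1 + 3 ^ n)) * ∫⁻ x in ball (0 : Esp n) 1, H x := by
    calc ∫⁻ x in A, ‖fderiv ℝ v x‖ₑ ^ p ≤ ∫⁻ x in A, K * (H (refl1 x) + H (refl2 x)) :=
          lintegral_mono hpt
      _ = K * ((∫⁻ x in A, H (refl1 x)) + ∫⁻ x in A, H (refl2 x)) := by
          rw [lintegral_const_mul' _ _ hKt, lintegral_add_left]
          exact hHm.comp refl1_continuous.measurable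
      _ ≤ K * ((1 + 3 ^ n) * (∫⁻ x in closedBall (0 : Esp n) 1, H x) +
            (1 + 3 ^ n) * ∫⁻ x in closedBall (0 : Esp n) 1, H x) := by
          gcongr
          · exact int_refl_le refl1 refl1_continuous (fun x => refl1_le) (fun x _ => refl1_norm x)
              (fun x y a b c d => (refl1_anti a b c d).trans (by gcongr; norm_num)) H hHm
          · exact int_refl_le refl2 refl2_continuous (fun x => refl2_le) (fun x => refl2_norm)
              (fun x y a b c d => refl2_anti a b c d) H hHm
      _ = _ := by rw [ball_eq_closedBall]; ring
  have hcmp : eLpNorm (fderiv ℝ v) rr volume ≤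
      (∫⁻ x in A, ‖fderiv ℝ v x‖ₑ ^ p) ^ (1 / p) * volume A ^ (1 / r - 1 / p) := by
    have hres : eLpNorm (fderiv ℝ v) rr (volume.restrict A) = eLpNorm (fderiv ℝ v) rr volume :=
      eLpNorm_restr _ A hsupp _
    rw [← hres]
    have := eLpNorm_le_eLpNorm_mul_rpow_measure_univ (μ := volume.restrict A) (p := rr)
      (q := ENNReal.ofReal p) (by
        rw [ENNReal.ofReal, ENNReal.coe_le_coe]
        exact Real.toNNReal_le_toNNReal hrp) (f := fderiv ℝ v) hDv.aestronglyMeasurable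
    rw [eLpNorm_eq_lintegral_rpow_enorm_toReal (p := ENNReal.ofReal p) (by simpa using hp0)
      (by simp), ENNReal.toReal_ofReal hp0.le, ENNReal.coe_toReal, hrr, Measure.restrict_apply_univ]
      at this
    exact this
  have hlhs : (∫⁻ x in ball (0 : Esp n) 1, ‖u x‖ₑ ^ q) ^ (1 / q) ≤ eLpNorm v qq volume := by
    rw [eLpNorm_eq_lintegral_rpow_enorm_toReal (by simpa [qq] using hq) (by simp),
      ENNReal.coe_toReal, hqq]
    refine ENNReal.rpow_le_rpow ?_ (by positivity)
    refine le_trans (le_of_eq ?_) (setLIntegral_le_lintegral (ball (0 : Esp n) 1) _)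
    apply setLIntegral_congr_fun measurableSet_ball
    intro x hx
    rw [mem_ball_zero_iff] at hx
    have h1 : χ x = 1 := χ.one_of_mem_closedBall (by simpa [hχ] using hx.le)
    simp only [hv, h1, one_mul, ext_le u hx.le]
  calc _ ≤ eLpNorm v qq volume := hlhs
    _ ≤ C1 * eLpNorm (fderiv ℝ v) rr volume := hGNS
    _ ≤ C1 * ((K * (2 * (1 + 3 ^ n)) * ∫⁻ x in ball (0 : Esp n) 1, H x) ^ (1 / p)
          * volume A ^ (1 / r - 1 / p)) := by
        gcongr
        refine hcmp.trans ?_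
        gcongr
    _ = _ := by
        rw [ENNReal.mul_rpow_of_nonneg _ _ (by positivity)]
        ring


lemma smooth_approx {n : ℕ} (ψ : Esp n → ℝ) (hψ : ContDiff ℝ 1 ψ) {δ : ℝ} (hδ : 0 < δ) :
    ∃ v : Esp n → ℝ, ContDiff ℝ (⊤ : ℕ∞) v ∧ ∀ x ∈ ball (0 : Esp n) 1,
      ‖v x - ψ x‖ ≤ δ ∧ ‖fderiv ℝ v x - fderiv ℝ ψ x‖ ≤ δ := by
  set χ : ContDiffBump (0 : Esp n) := ⟨1, 2, by norm_num, by norm_num⟩ with hχ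
  have hχs : ContDiff ℝ 1 χ := χ.contDiff
  set g : Esp n → ℝ := fun x => χ x * ψ x with hg
  have hgs : ContDiff ℝ 1 g := hχs.mul hψ
  have hgc : HasCompactSupport g := χ.hasCompactSupport.mul_right
  have hDg : Continuous (fderiv ℝ g) := hgs.continuous_fderiv (by norm_num)
  have hDgc : HasCompactSupport (fderiv ℝ g) := hgc.fderiv (𝕜 := ℝ)
  have hgψ : ∀ x ∈ ball (0 : Esp n) 1, g x = ψ x := by
    intro x hx
    rw [mem_ball_zero_iff] at hx
    have h1 : χ x = 1 := χ.one_of_mem_closedBall (by simpa [hχ] using hx.le)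
    simp [hg, h1]
  have hu1 := hgc.uniformContinuous_of_continuous hgs.continuous
  have hu2 := hDgc.uniformContinuous_of_continuous hDg
  obtain ⟨d1, hd1, h1⟩ := Metric.uniformContinuous_iff.1 hu1 δ hδ
  obtain ⟨d2, hd2, h2⟩ := Metric.uniformContinuous_iff.1 hu2 δ hδ
  have hd : 0 < min d1 d2 := lt_min hd1 hd2
  set φ : ContDiffBump (0 : Esp n) := ⟨min d1 d2 / 2, min d1 d2, half_pos hd, half_lt_self hd⟩ with hφ
  have hφr : φ.rOut = min d1 d2 := rfl
  refine ⟨convolution (φ.normed volume) g (ContinuousLinearMap.lsmul ℝ ℝ) volume, ?_, ?_⟩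
  · exact φ.hasCompactSupport_normed.contDiff_convolution_left _ φ.contDiff_normed
      hgs.continuous.locallyIntegrable
  · intro x hx
    constructor
    · rw [← hgψ x hx, ← dist_eq_norm]
      refine φ.dist_normed_convolution_le hgs.continuous.aestronglyMeasurable ?_
      intro y hy
      rw [hφr] at hy
      exact (h1 (lt_of_lt_of_le hy (min_le_left _ _))).le
    · have e1 : fderiv ℝ ψ x = fderiv ℝ g x := by
        apply Filter.EventuallyEq.fderiv_eq
        filter_upwards [isOpen_ball.mem_nhds hx] with y hy
        exact (hgψ y hy).symm
      have hder := hgc.hasFDerivAt_convolution_right (ContinuousLinearMap.lsmul ℝ ℝ)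
        (μ := volume) (f := φ.normed volume)
        (φ.continuous_normed.locallyIntegrable) hgs x
      have e2 : (convolution (φ.normed volume) (fderiv ℝ g)
          ((ContinuousLinearMap.lsmul ℝ ℝ).precompR (Esp n)) volume) x =
          (convolution (φ.normed volume) (fderiv ℝ g) (ContinuousLinearMap.lsmul ℝ ℝ) volume) x := by
        simp only [convolution]
        congr 1
      rw [e1, hder.fderiv, e2, ← dist_eq_norm]
      refine φ.dist_normed_convolution_le hDg.aestronglyMeasurable ?_
      intro y hy
      rw [hφr] at hy
      exact (h2 (lt_of_lt_of_le hy (min_le_right _ _))).le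

lemma ofReal_norm_rpow {F : Type*} [SeminormedAddCommGroup F] (x : F) {p : ℝ} (hp : 0 ≤ p) :
    ENNReal.ofReal (‖x‖ ^ p) = ‖x‖ₑ ^ p := by
  rw [← ENNReal.ofReal_rpow_of_nonneg (norm_nonneg _) hp, ofReal_norm]

lemma pCapacity_le {n : ℕ} {p : ℝ} {K U : Set (Esp n)} (φ : Esp n → ℝ)
    (hφs : ContDiff ℝ (⊤ : ℕ∞) φ) (hφc : HasCompactSupport φ) (hφU : tsupport φ ⊆ U)
    (hφK : ∀ x ∈ K, 1 ≤ φ x) :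
    pCapacity n p K U ≤ ∫⁻ x in U, ENNReal.ofReal (‖fderiv ℝ φ x‖ ^ p) := by
  unfold pCapacity
  refine iInf_le_of_le φ ?_
  refine iInf_le_of_le hφs ?_
  refine iInf_le_of_le hφc ?_
  refine iInf_le_of_le hφU ?_
  exact iInf_le_of_le hφK le_rfl

lemma cap_le (n : ℕ) {p : ℝ} (hp : 1 < p) : ∃ C : ℝ≥0∞, C ≠ ∞ ∧
    ∀ (K : Set (Esp n)) (_ : K ⊆ closedBall 0 (1 / 2)) (ψ : Esp n → ℝ) (_ : ContDiff ℝ 1 ψ)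
      (_ : ∀ x ∈ K, 1 ≤ ψ x), pCapacity n p K (ball 0 1) ≤
        C * ∫⁻ x in ball (0 : Esp n) 1, (‖ψ x‖ₑ ^ p + ‖fderiv ℝ ψ x‖ₑ ^ p) := by
  have hp0 : 0 < p := by linarith
  set η : ContDiffBump (0 : Esp n) := ⟨1 / 2, 3 / 4, by norm_num, by norm_num⟩ with hη
  have hηs : ContDiff ℝ 1 η := η.contDiff
  have hηD : Continuous (fderiv ℝ η) := hηs.continuous_fderiv (by norm_num)
  obtain ⟨M, hM⟩ := (η.hasCompactSupport.fderiv (𝕜 := ℝ)).exists_bound_of_continuous hηD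
  have hM0 : 0 ≤ M := (norm_nonneg _).trans (hM 0)
  set C : ℝ≥0∞ := ENNReal.ofReal (2 * (1 + M)) ^ p * (2 ^ (p - 1) * 2 ^ (p - 1)) with hC
  have hCt : C ≠ ∞ := by
    have : 0 ≤ p - 1 := by linarith
    rw [hC]; finiteness
  refine ⟨C, hCt, ?_⟩
  intro K hK ψ hψ h1
  set B := ball (0 : Esp n) 1 with hB
  have hBt : volume B ≠ ∞ := measure_ball_lt_top.ne
  set H : Esp n → ℝ≥0∞ := fun x => ‖ψ x‖ₑ ^ p + ‖fderiv ℝ ψ x‖ₑ ^ p with hH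
  have main : ∀ δ : ℝ, 0 < δ → δ ≤ 1 / 2 → pCapacity n p K B ≤
      C * ((∫⁻ x in B, H x) + (ENNReal.ofReal δ ^ p + ENNReal.ofReal δ ^ p) * volume B) := by
    intro δ hδ hδ2
    obtain ⟨v, hv, hvψ⟩ := smooth_approx ψ hψ hδ
    have hv1 : ContDiff ℝ 1 v := hv.of_le (by exact_mod_cast le_top)
    set φ : Esp n → ℝ := fun x => 2 * (η x * v x) with hφ
    have hφs : ContDiff ℝ (⊤ : ℕ∞) φ := contDiff_const.mul (η.contDiff.mul hv)
    have hts : tsupport φ ⊆ tsupport η := by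
      apply closure_mono
      intro x hx hc
      apply hx
      simp [hφ, hc]
    have hφc : HasCompactSupport φ :=
      η.hasCompactSupport.isCompact.of_isClosed_subset (isClosed_tsupport _) hts
    have hφB : tsupport φ ⊆ B := by
      refine hts.trans ?_
      rw [η.tsupport_eq]
      exact closedBall_subset_ball (by norm_num [hη])
    have hφK : ∀ x ∈ K, 1 ≤ φ x := by
      intro x hx
      have a1 : η x = 1 := η.one_of_mem_closedBall (hK hx)
      have a2 : x ∈ ball (0 : Esp n) 1 := closedBall_subset_ball (by norm_num) (hK hx)
      have a3 := (hvψ x a2).1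
      rw [Real.norm_eq_abs, abs_le] at a3
      have a4 := h1 x hx
      simp only [hφ, a1]
      linarith
    refine (pCapacity_le φ hφs hφc hφB hφK).trans ?_
    have hpt : ∀ x ∈ B, ENNReal.ofReal (‖fderiv ℝ φ x‖ ^ p) ≤
        C * (H x + (ENNReal.ofReal δ ^ p + ENNReal.ofReal δ ^ p)) := by
      intro x hx
      rw [ofReal_norm_rpow _ hp0.le]
      have b1 : ‖fderiv ℝ φ x‖ ≤ (2 * (1 + M)) * ((‖ψ x‖ + ‖fderiv ℝ ψ x‖) + (δ + δ)) := by
        have e : fderiv ℝ φ x = (2 : ℝ) • (η x • fderiv ℝ v x + v x • fderiv ℝ η x) := by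
          have hd : HasFDerivAt φ ((2 : ℝ) • (η x • fderiv ℝ v x + v x • fderiv ℝ η x)) x :=
            (((hηs.differentiable (by norm_num)) x).hasFDerivAt.mul
              ((hv1.differentiable (by norm_num)) x).hasFDerivAt).const_mul 2
          exact hd.fderiv
        rw [e, norm_smul]
        have c0 := norm_add_le (η x • fderiv ℝ v x) (v x • fderiv ℝ η x)
        rw [norm_smul, norm_smul] at c0
        have c1 : ‖η x‖ ≤ 1 := by
          rw [Real.norm_eq_abs, abs_of_nonneg η.nonneg]; exact η.le_one
        have c2 : ‖v x‖ ≤ ‖ψ x‖ + δ := by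
          have := norm_add_le (v x - ψ x) (ψ x)
          rw [sub_add_cancel] at this
          linarith [(hvψ x hx).1]
        have c3 : ‖fderiv ℝ v x‖ ≤ ‖fderiv ℝ ψ x‖ + δ := by
          have := norm_add_le (fderiv ℝ v x - fderiv ℝ ψ x) (fderiv ℝ ψ x)
          rw [sub_add_cancel] at this
          linarith [(hvψ x hx).2]
        have c4 := mul_le_mul c1 c3 (norm_nonneg _) zero_le_one
        have c5 := mul_le_mul c2 (hM x) (norm_nonneg _) (by positivity)
        have c6 := mul_nonneg hM0 (norm_nonneg (fderiv ℝ ψ x))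
        have c7 := mul_nonneg hM0 hδ.le
        have c8 := norm_nonneg (ψ x)
        rw [show ‖(2 : ℝ)‖ = 2 by norm_num]
        nlinarith
      have b2 : ‖fderiv ℝ φ x‖ₑ ≤ ENNReal.ofReal (2 * (1 + M)) *
          ((‖ψ x‖ₑ + ‖fderiv ℝ ψ x‖ₑ) + (ENNReal.ofReal δ + ENNReal.ofReal δ)) := by
        simp only [← ofReal_norm]
        rw [← ENNReal.ofReal_add (by positivity) (by positivity),
          ← ENNReal.ofReal_add (by positivity) (by positivity),
          ← ENNReal.ofReal_add (by positivity) (by positivity),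
          ← ENNReal.ofReal_mul (by positivity)]
        exact ENNReal.ofReal_le_ofReal b1
      refine (ENNReal.rpow_le_rpow b2 hp0.le).trans ?_
      rw [ENNReal.mul_rpow_of_nonneg _ _ hp0.le, hC, mul_assoc]
      gcongr
      exact four_rpow hp.le _ _ _ _
    refine (setLIntegral_mono' measurableSet_ball hpt).trans ?_
    rw [lintegral_const_mul' _ _ hCt, lintegral_add_right _ measurable_const, setLIntegral_const]
  have hlim : Tendsto (fun δ : ℝ => C * ((∫⁻ x in B, H x) +
      (ENNReal.ofReal δ ^ p + ENNReal.ofReal δ ^ p) * volume B)) (𝓝[>] 0)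
      (𝓝 (C * ((∫⁻ x in B, H x) + (0 + 0) * volume B))) := by
    apply ENNReal.Tendsto.const_mul _ (Or.inr hCt)
    apply Tendsto.add tendsto_const_nhds
    apply ENNReal.Tendsto.mul_const _ (Or.inr hBt)
    have h3 : Tendsto (fun δ : ℝ => ENNReal.ofReal δ ^ p) (𝓝[>] 0) (𝓝 0) := by
      have h4 : Tendsto (fun δ : ℝ => ENNReal.ofReal δ) (𝓝[>] 0) (𝓝 0) := by
        have := (ENNReal.continuous_ofReal.tendsto 0).mono_left (nhdsWithin_le_nhds (s := Ioi 0))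
        simpa using this
      have h5 := h4.ennrpow_const p
      simpa [hp0] using h5
    exact h3.add h3
  have := ge_of_tendsto hlim (b := pCapacity n p K B) ?_
  · simpa using this
  · filter_upwards [Ioc_mem_nhdsGT (show (0 : ℝ) < 1 / 2 by norm_num)] with δ hδ
    exact main δ hδ.1 hδ.2


lemma kappa_facts {n : ℕ} (hn : 2 ≤ n) {p κ : ℝ} (hp : 1 < p)
    (hκ : κ = if p < n then (n : ℝ) / ((n : ℝ) - p) else 2) :
    1 < κ ∧ ∃ r : ℝ, 1 ≤ r ∧ r ≤ p ∧ (κ * p)⁻¹ = r⁻¹ - (n : ℝ)⁻¹ := by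
  have hn' : (2 : ℝ) ≤ n := by exact_mod_cast hn
  split_ifs at hκ with h
  · have h1 : 0 < (n : ℝ) - p := by linarith
    refine ⟨?_, p, hp.le, le_rfl, ?_⟩
    · rw [hκ, lt_div_iff₀ h1]; linarith
    · rw [hκ]; field_simp
  · push Not at h
    have hp0 : 0 < p := by linarith
    have hn0 : (0 : ℝ) < n := by linarith
    refine ⟨by rw [hκ]; norm_num, ((2 * p)⁻¹ + (n : ℝ)⁻¹)⁻¹, ?_, ?_, ?_⟩
    · rw [one_le_inv₀ (by positivity)]
      have h1 : (2 * p)⁻¹ ≤ 1 / 2 := by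
        rw [inv_eq_one_div]; apply one_div_le_one_div_of_le <;> linarith
      have h2 : (n : ℝ)⁻¹ ≤ 1 / 2 := by
        rw [inv_eq_one_div]; apply one_div_le_one_div_of_le <;> linarith
      linarith
    · apply inv_le_of_inv_le₀ hp0
      have h2 : p⁻¹ ≤ (n : ℝ)⁻¹ := by
        apply inv_anti₀ <;> linarith
      have : 0 < (2 * p)⁻¹ := by positivity
      linarith
    · rw [inv_inv, hκ]; ring

lemma unit_ball {n : ℕ} (hn : 2 ≤ n) {p κ : ℝ} (hp : 1 < p)
    (hκ : κ = if p < n then (n : ℝ) / ((n : ℝ) - p) else 2) :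
    ∃ C : ℝ≥0∞, C ≠ ∞ ∧ ∀ w : Esp n → ℝ, ContDiff ℝ 1 w →
      pCapacity n p {x ∈ closedBall (0 : Esp n) (1 / 2) | w x = 0} (ball 0 1) *
        ((volume (ball (0 : Esp n) 1))⁻¹ * ∫⁻ x in ball (0 : Esp n) 1, ‖w x‖ₑ ^ (κ * p)) ^ (1 / κ) ≤
      C * ∫⁻ x in ball (0 : Esp n) 1, ‖fderiv ℝ w x‖ₑ ^ p := by
  obtain ⟨hκ1, r, hr1, hrp, hqr⟩ := kappa_facts hn hp hκ
  have hp0 : 0 < p := by linarith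
  have hκ0 : 0 < κ := by linarith
  have hq0 : 0 < κ * p := by positivity
  have hq1 : 1 ≤ κ * p := by nlinarith
  have hk0 : 0 ≤ 1 / κ := by positivity
  have hk1 : 1 / κ ≤ 1 := by rw [div_le_one hκ0]; exact hκ1.le
  obtain ⟨C1, hC1, hP⟩ := poincare n hp
  obtain ⟨C2, hC2, hS⟩ := sobolev hn hp hq0 hr1 hrp hqr
  obtain ⟨C3, hC3, hC⟩ := cap_le n hp
  set B := ball (0 : Esp n) 1 with hB
  set V := volume B with hV
  have hVt : V ≠ ∞ := measure_ball_lt_top.ne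
  have hV0 : V ≠ 0 := (measure_ball_pos _ _ one_pos).ne'
  have hVi : V⁻¹ ≠ ∞ := ENNReal.inv_ne_top.2 hV0
  set G : ℝ≥0∞ := (2 ^ (κ * p - 1)) ^ (1 / κ) with hG
  have hGt : G ≠ ∞ := by
    have : 0 ≤ κ * p - 1 := by linarith
    rw [hG]; finiteness
  set C : ℝ≥0∞ := G * (C3 * (C1 + 1) + C3 * V * ((V⁻¹) ^ (1 / κ) * (C2 ^ p * (C1 + 1)))) with hCdef
  refine ⟨C, by rw [hCdef]; finiteness, ?_⟩
  intro w hw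
  obtain ⟨a, ha⟩ := hP w hw
  set K : Set (Esp n) := {x ∈ closedBall (0 : Esp n) (1 / 2) | w x = 0} with hK
  have hKs : K ⊆ closedBall 0 (1 / 2) := fun x hx => hx.1
  set D := ∫⁻ x in B, ‖fderiv ℝ w x‖ₑ ^ p with hD
  set cap := pCapacity n p K B with hcap
  set u : Esp n → ℝ := fun x => w x - a with hu
  have hus : ContDiff ℝ 1 u := hw.sub contDiff_const
  have hDu : ∀ x, fderiv ℝ u x = fderiv ℝ w x := fun x => by
    rw [hu]; exact fderiv_sub_const a
  have hDm : Measurable fun x => ‖fderiv ℝ w x‖ₑ ^ p := by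
    have := hw.continuous_fderiv (by norm_num)
    exact this.measurable.enorm.pow_const p
  have hum : Measurable fun x => ‖u x‖ₑ ^ (κ * p) :=
    hus.continuous.measurable.enorm.pow_const _
  have hsum : ∫⁻ x in B, (‖u x‖ₑ ^ p + ‖fderiv ℝ u x‖ₑ ^ p) ≤ (C1 + 1) * D := by
    simp only [hDu]
    rw [lintegral_add_right _ hDm, add_mul, one_mul]
    exact add_le_add ha le_rfl
  -- Sobolev part
  have hU : (∫⁻ x in B, ‖u x‖ₑ ^ (κ * p)) ^ (1 / κ) ≤ C2 ^ p * (C1 + 1) * D := by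
    have h1 := ENNReal.rpow_le_rpow (hS u hus) hp0.le
    rw [ENNReal.mul_rpow_of_nonneg _ _ hp0.le, ← ENNReal.rpow_mul, ← ENNReal.rpow_mul,
      show 1 / (κ * p) * p = 1 / κ by field_simp, show 1 / p * p = 1 by field_simp,
      ENNReal.rpow_one] at h1
    refine h1.trans ?_
    rw [mul_assoc]
    exact mul_le_mul_right hsum _
  -- capacity parts
  have hc1 : cap ≤ C3 * V := by
    have := hC K hKs (fun _ => 1) contDiff_const (fun _ _ => le_rfl)
    have e : ∀ x : Esp n, ‖(1 : ℝ)‖ₑ ^ p + ‖fderiv ℝ (fun _ : Esp n => (1 : ℝ)) x‖ₑ ^ p = 1 := by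
      intro x
      have e0 : ‖(0 : Esp n →L[ℝ] ℝ)‖ₑ = 0 := by
        rw [← ofReal_norm, norm_zero, ENNReal.ofReal_zero]
      rw [fderiv_const_apply, e0, ENNReal.zero_rpow_of_pos hp0]
      simp
    simp only [e] at this
    rwa [setLIntegral_const, one_mul] at this
  have hc2 : cap * ‖a‖ₑ ^ p ≤ C3 * (C1 + 1) * D := by
    by_cases h0 : a = 0
    · simp [h0, ENNReal.zero_rpow_of_pos hp0]
    · have hψ : ContDiff ℝ 1 (fun x => (-a⁻¹) * u x) := contDiff_const.mul hus
      have h1 := hC K hKs (fun x => (-a⁻¹) * u x) hψ (by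
        intro x hx
        have : w x = 0 := hx.2
        simp [hu, this, h0])
      have hd : ∀ x, fderiv ℝ (fun x => (-a⁻¹) * u x) x = (-a⁻¹) • fderiv ℝ u x := fun x =>
        (((hus.differentiable (by norm_num)) x).hasFDerivAt.const_mul (-a⁻¹)).fderiv
      have h2 : ∀ x, ‖(-a⁻¹) * u x‖ₑ ^ p + ‖fderiv ℝ (fun x => (-a⁻¹) * u x) x‖ₑ ^ p =
          ‖-a⁻¹‖ₑ ^ p * (‖u x‖ₑ ^ p + ‖fderiv ℝ u x‖ₑ ^ p) := by
        intro x
        rw [hd, enorm_smul, enorm_mul, ENNReal.mul_rpow_of_nonneg _ _ hp0.le,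
          ENNReal.mul_rpow_of_nonneg _ _ hp0.le, mul_add]
      simp only [h2] at h1
      rw [lintegral_const_mul' _ _ (by finiteness)] at h1
      have h3 : ‖-a⁻¹‖ₑ ^ p * ‖a‖ₑ ^ p = 1 := by
        rw [← ENNReal.mul_rpow_of_nonneg _ _ hp0.le, ← enorm_mul]
        simp [h0]
      calc cap * ‖a‖ₑ ^ p ≤ (C3 * (‖-a⁻¹‖ₑ ^ p * ((C1 + 1) * D))) * ‖a‖ₑ ^ p := by
            refine mul_le_mul_left (h1.trans ?_) _
            exact mul_le_mul_right (mul_le_mul_right hsum _) _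
        _ = C3 * (C1 + 1) * D * (‖-a⁻¹‖ₑ ^ p * ‖a‖ₑ ^ p) := by ring
        _ = _ := by rw [h3, mul_one]
  -- combination
  have hw1 : ∫⁻ x in B, ‖w x‖ₑ ^ (κ * p) ≤
      2 ^ (κ * p - 1) * (‖a‖ₑ ^ (κ * p) * V + ∫⁻ x in B, ‖u x‖ₑ ^ (κ * p)) := by
    have h2t : (2 : ℝ≥0∞) ^ (κ * p - 1) ≠ ∞ := by
      have : 0 ≤ κ * p - 1 := by linarith
      finiteness
    have : ∀ x ∈ B, ‖w x‖ₑ ^ (κ * p) ≤ 2 ^ (κ * p - 1) * (‖a‖ₑ ^ (κ * p) + ‖u x‖ₑ ^ (κ * p)) := by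
      intro x _
      have e : ‖w x‖ₑ ≤ ‖a‖ₑ + ‖u x‖ₑ := by
        have := enorm_add_le a (u x)
        simpa [hu] using this
      exact (ENNReal.rpow_le_rpow e hq0.le).trans (ENNReal.rpow_add_le_mul_rpow_add_rpow _ _ hq1)
    refine (setLIntegral_mono' measurableSet_ball this).trans ?_
    rw [lintegral_const_mul' _ _ h2t, lintegral_add_right _ hum, setLIntegral_const]
  have hw2 : (V⁻¹ * ∫⁻ x in B, ‖w x‖ₑ ^ (κ * p)) ^ (1 / κ) ≤
      G * (‖a‖ₑ ^ p + (V⁻¹) ^ (1 / κ) * (∫⁻ x in B, ‖u x‖ₑ ^ (κ * p)) ^ (1 / κ)) := by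
    have h1 : V⁻¹ * ∫⁻ x in B, ‖w x‖ₑ ^ (κ * p) ≤
        2 ^ (κ * p - 1) * (‖a‖ₑ ^ (κ * p) + V⁻¹ * ∫⁻ x in B, ‖u x‖ₑ ^ (κ * p)) := by
      refine (mul_le_mul_right hw1 _).trans (le_of_eq ?_)
      have := ENNReal.mul_inv_cancel hV0 hVt
      calc _ = 2 ^ (κ * p - 1) * (‖a‖ₑ ^ (κ * p) * (V * V⁻¹) +
            V⁻¹ * ∫⁻ x in B, ‖u x‖ₑ ^ (κ * p)) := by ring
        _ = _ := by rw [this, mul_one]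
    refine (ENNReal.rpow_le_rpow h1 hk0).trans ?_
    rw [ENNReal.mul_rpow_of_nonneg _ _ hk0]
    refine mul_le_mul_right ((ENNReal.rpow_add_le_add_rpow _ _ hk0 hk1).trans (le_of_eq ?_)) _
    rw [ENNReal.mul_rpow_of_nonneg _ _ hk0, ← ENNReal.rpow_mul,
      show κ * p * (1 / κ) = p by field_simp]
  calc cap * (V⁻¹ * ∫⁻ x in B, ‖w x‖ₑ ^ (κ * p)) ^ (1 / κ)
      ≤ cap * (G * (‖a‖ₑ ^ p + (V⁻¹) ^ (1 / κ) * (∫⁻ x in B, ‖u x‖ₑ ^ (κ * p)) ^ (1 / κ))) :=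
        mul_le_mul_right hw2 _
    _ = G * (cap * ‖a‖ₑ ^ p +
          cap * ((V⁻¹) ^ (1 / κ) * (∫⁻ x in B, ‖u x‖ₑ ^ (κ * p)) ^ (1 / κ))) := by ring
    _ ≤ G * (C3 * (C1 + 1) * D + C3 * V * ((V⁻¹) ^ (1 / κ) * (C2 ^ p * (C1 + 1) * D))) := by
        refine mul_le_mul_right (add_le_add hc2 (mul_le_mul' hc1 (mul_le_mul_right hU _))) _
    _ = C * D := by rw [hCdef]; ring

lemma cap_scale {n : ℕ} {p : ℝ} (hp : 1 < p) (x₀ : Esp n) {R : ℝ} (hR : 0 < R) (w : Esp n → ℝ) :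
    pCapacity n p {x ∈ closedBall x₀ (R / 2) | w x = 0} (ball x₀ R) ≤
      (ENNReal.ofReal R ^ n * ENNReal.ofReal R⁻¹ ^ p) *
        pCapacity n p {y ∈ closedBall (0 : Esp n) (1 / 2) | w (x₀ + R • y) = 0} (ball 0 1) := by
  have hp0 : 0 < p := by linarith
  have hRi : 0 < R⁻¹ := by positivity
  set S : Esp n → Esp n := fun x => R⁻¹ • (x - x₀) with hS
  have hSc : Continuous S := by fun_prop
  have hnS : ∀ x, ‖S x‖ = R⁻¹ * dist x x₀ := fun x => by
    rw [hS, dist_eq_norm]; simp only [norm_smul]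
    rw [Real.norm_of_nonneg hRi.le]
  have hΦS : ∀ x, x₀ + R • S x = x := fun x => by
    simp [hS, smul_smul, mul_inv_cancel₀ hR.ne']
  set c : ℝ≥0∞ := ENNReal.ofReal R ^ n * ENNReal.ofReal R⁻¹ ^ p with hc
  have hct : c ≠ ∞ := by rw [hc]; finiteness
  have hc0 : c ≠ 0 := by
    rw [hc]
    refine mul_ne_zero (pow_ne_zero _ (by simpa using hR)) ?_
    exact (ENNReal.rpow_pos (by simpa using hR) ENNReal.ofReal_ne_top).ne'
  rw [mul_comm, ← ENNReal.div_le_iff hc0 hct]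
  conv_rhs => unfold pCapacity
  refine le_iInf fun φ => le_iInf fun hφs => le_iInf fun hφc => le_iInf fun hφU =>
    le_iInf fun hφK => ?_
  rw [ENNReal.div_le_iff hc0 hct, mul_comm]
  have hφ1 : ContDiff ℝ 1 φ := hφs.of_le (by exact_mod_cast le_top)
  set ψ : Esp n → ℝ := fun x => φ (S x) with hψ
  have hSs : ContDiff ℝ (⊤ : ℕ∞) S := by
    rw [hS]; fun_prop
  have hts : tsupport ψ ⊆ S ⁻¹' (tsupport φ) :=
    closure_minimal (fun x hx => subset_closure hx) ((isClosed_tsupport φ).preimage hSc)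
  have hψU : tsupport ψ ⊆ ball x₀ R := by
    intro x hx
    have := hφU (hts hx)
    rw [mem_ball_zero_iff, hnS, inv_mul_lt_iff₀ hR, mul_one] at this
    exact this
  have hψc : HasCompactSupport ψ :=
    (isCompact_closedBall x₀ R).of_isClosed_subset (isClosed_tsupport _)
      (hψU.trans ball_subset_closedBall)
  refine (pCapacity_le ψ (hφs.comp hSs) hψc hψU ?_).trans ?_
  · intro x hx
    apply hφK
    refine ⟨?_, ?_⟩
    · have h1 : dist x x₀ ≤ R / 2 := hx.1
      rw [mem_closedBall_zero_iff, hnS, inv_mul_le_iff₀ hR]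
      linarith
    · show w (x₀ + R • S x) = 0
      rw [hΦS]; exact hx.2
  · have hd : ∀ x, fderiv ℝ ψ x = R⁻¹ • fderiv ℝ φ (S x) := by
      intro x
      have h1 : HasFDerivAt S (R⁻¹ • ContinuousLinearMap.id ℝ (Esp n)) x :=
        ((hasFDerivAt_id x).sub_const x₀).const_smul R⁻¹
      have h2 := (((hφ1.differentiable (by norm_num)) (S x)).hasFDerivAt).comp x h1
      rw [show ψ = φ ∘ S from rfl, h2.fderiv]
      ext y
      simp
    have he : ∀ x, ENNReal.ofReal (‖fderiv ℝ ψ x‖ ^ p) =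
        ENNReal.ofReal R⁻¹ ^ p * ENNReal.ofReal (‖fderiv ℝ φ (S x)‖ ^ p) := by
      intro x
      rw [hd, ofReal_norm_rpow _ hp0.le, ofReal_norm_rpow _ hp0.le, enorm_smul,
        ENNReal.mul_rpow_of_nonneg _ _ hp0.le, ← ofReal_norm, Real.norm_of_nonneg hRi.le]
    simp only [he]
    rw [lintegral_const_mul' _ _ (by finiteness), hc, mul_comm (ENNReal.ofReal R ^ n), mul_assoc]
    refine mul_le_mul_right ?_ _
    have hm : Measurable fun y => ENNReal.ofReal (‖fderiv ℝ φ y‖ ^ p) := by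
      have := hφ1.continuous_fderiv (by norm_num)
      simp only [ofReal_norm_rpow _ hp0.le]
      exact this.measurable.enorm.pow_const p
    refine cov S hSc.measurable (ball x₀ R) (ball 0 1) ?_ R.toNNReal ?_ _ hm
    · intro x hx
      have hx' : dist x x₀ < R := hx
      rw [mem_ball_zero_iff, hnS, inv_mul_lt_iff₀ hR, mul_one]
      exact hx'
    · intro x _ y _
      rw [Real.coe_toNNReal _ hR.le]
      simp only [hS, dist_smul₀, dist_sub_right, Real.norm_of_nonneg hRi.le]
      rw [← mul_assoc, mul_inv_cancel₀ hR.ne', one_mul]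

lemma avg_scale {n : ℕ} {q : ℝ} (x₀ : Esp n) {R : ℝ} (hR : 0 < R) (w : Esp n → ℝ)
    (hw : Continuous w) :
    (volume (ball x₀ R))⁻¹ * ∫⁻ x in ball x₀ R, ‖w x‖ₑ ^ q ≤
      (volume (ball (0 : Esp n) 1))⁻¹ * ∫⁻ y in ball (0 : Esp n) 1, ‖w (x₀ + R • y)‖ₑ ^ q := by
  have hRi : 0 < R⁻¹ := by positivity
  set S : Esp n → Esp n := fun x => R⁻¹ • (x - x₀) with hS
  have hSc : Continuous S := by fun_prop
  have hnS : ∀ x, ‖S x‖ = R⁻¹ * dist x x₀ := fun x => by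
    rw [hS, dist_eq_norm]; simp only [norm_smul]
    rw [Real.norm_of_nonneg hRi.le]
  have hΦS : ∀ x, x₀ + R • S x = x := fun x => by
    simp [hS, smul_smul, mul_inv_cancel₀ hR.ne']
  have h1 : ∫⁻ x in ball x₀ R, ‖w x‖ₑ ^ q ≤
      ENNReal.ofReal R ^ n * ∫⁻ y in ball (0 : Esp n) 1, ‖w (x₀ + R • y)‖ₑ ^ q := by
    have hm : Measurable fun y : Esp n => ‖w (x₀ + R • y)‖ₑ ^ q := by
      have : Continuous fun y : Esp n => w (x₀ + R • y) := by fun_prop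
      exact this.measurable.enorm.pow_const q
    have := cov S hSc.measurable (ball x₀ R) (ball 0 1) ?_ R.toNNReal ?_ _ hm
    · simp only [hΦS] at this
      exact this
    · intro x hx
      have hx' : dist x x₀ < R := hx
      rw [mem_ball_zero_iff, hnS, inv_mul_lt_iff₀ hR, mul_one]
      exact hx'
    · intro x _ y _
      rw [Real.coe_toNNReal _ hR.le]
      simp only [hS, dist_smul₀, dist_sub_right, Real.norm_of_nonneg hRi.le]
      rw [← mul_assoc, mul_inv_cancel₀ hR.ne', one_mul]
  have h2 : volume (ball x₀ R) = ENNReal.ofReal R ^ n * volume (ball (0 : Esp n) 1) := by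
    rw [Measure.addHaar_ball_of_pos _ _ hR, finrank_euclideanSpace_fin, ENNReal.ofReal_pow hR.le]
  have hR0 : ENNReal.ofReal R ^ n ≠ 0 := pow_ne_zero _ (by simpa using hR)
  have hRt : ENNReal.ofReal R ^ n ≠ ∞ := by finiteness
  refine (mul_le_mul_right h1 _).trans (le_of_eq ?_)
  rw [h2, ENNReal.mul_inv (Or.inl hR0) (Or.inl hRt)]
  calc _ = ((ENNReal.ofReal R ^ n) * (ENNReal.ofReal R ^ n)⁻¹) *
        ((volume (ball (0 : Esp n) 1))⁻¹ *
          ∫⁻ y in ball (0 : Esp n) 1, ‖w (x₀ + R • y)‖ₑ ^ q) := by ring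
    _ = _ := by rw [ENNReal.mul_inv_cancel hR0 hRt, one_mul]

lemma grad_scale {n : ℕ} {p : ℝ} (hp : 1 < p) (x₀ : Esp n) {R : ℝ} (hR : 0 < R) (w : Esp n → ℝ)
    (hw : ContDiff ℝ 1 w) :
    ∫⁻ y in ball (0 : Esp n) 1, ‖fderiv ℝ (fun y => w (x₀ + R • y)) y‖ₑ ^ p ≤
      (ENNReal.ofReal R ^ p * ENNReal.ofReal R⁻¹ ^ n) * ∫⁻ x in ball x₀ R, ‖fderiv ℝ w x‖ₑ ^ p := by
  have hp0 : 0 < p := by linarith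
  have hRi : 0 < R⁻¹ := by positivity
  set Φ : Esp n → Esp n := fun y => x₀ + R • y with hΦ
  have hΦc : Continuous Φ := by fun_prop
  have hd : ∀ y, fderiv ℝ (fun y => w (Φ y)) y = R • fderiv ℝ w (Φ y) := by
    intro x
    have h1 : HasFDerivAt Φ (R • ContinuousLinearMap.id ℝ (Esp n)) x :=
      ((hasFDerivAt_id x).const_smul R).const_add x₀
    have h2 := (((hw.differentiable (by norm_num)) (Φ x)).hasFDerivAt).comp x h1
    rw [show (fun y => w (Φ y)) = w ∘ Φ from rfl, h2.fderiv]
    ext y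
    simp
  have he : ∀ y, ‖fderiv ℝ (fun y => w (Φ y)) y‖ₑ ^ p =
      ENNReal.ofReal R ^ p * ‖fderiv ℝ w (Φ y)‖ₑ ^ p := by
    intro y
    rw [hd, enorm_smul, ENNReal.mul_rpow_of_nonneg _ _ hp0.le, ← ofReal_norm R,
      Real.norm_of_nonneg hR.le]
  show ∫⁻ y in ball (0 : Esp n) 1, ‖fderiv ℝ (fun y => w (Φ y)) y‖ₑ ^ p ≤ _
  simp only [he]
  rw [lintegral_const_mul' _ _ (by finiteness), mul_assoc]
  refine mul_le_mul_right ?_ _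
  have hm : Measurable fun y => ‖fderiv ℝ w y‖ₑ ^ p := by
    have := hw.continuous_fderiv (by norm_num)
    exact this.measurable.enorm.pow_const p
  refine cov Φ hΦc.measurable (ball 0 1) (ball x₀ R) ?_ R⁻¹.toNNReal ?_ _ hm
  · intro y hy
    rw [mem_ball_zero_iff] at hy
    rw [mem_ball, dist_eq_norm]
    simp only [hΦ, add_sub_cancel_left, norm_smul, Real.norm_of_nonneg hR.le]
    nlinarith
  · intro x _ y _
    rw [Real.coe_toNNReal _ hRi.le]
    simp only [hΦ, dist_add_left, dist_smul₀, Real.norm_of_nonneg hR.le]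
    rw [← mul_assoc, inv_mul_cancel₀ hR.ne', one_mul]

end CapSob

/-- **capacitary Sobolev inequality.** For `1 < p < ∞`, with
`κ = n/(n-p)` if `p < n` and `κ = 2` if `p ≥ n`, there is `c = c(n,p)` such that for every
`C¹` function `w : ℝⁿ → ℝ`, with `K_ρ(w) = {x ∈ B̄(x₀,ρ) : w x = 0}`,
`cap_p(K_ρ(w), B(x₀,2ρ)) · ( ⨍_{B(x₀,2ρ)} |w|^{κp} )^{1/κ} ≤ c ∫_{B(x₀,2ρ)} |Dw|^p`. -/
theorem capacitary_sobolev (n : ℕ) (hn : 2 ≤ n) (p κ : ℝ) (hp : 1 < p)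
    (hκ : κ = if p < n then (n : ℝ) / ((n : ℝ) - p) else 2) :
    ∃ c : ℝ, 0 < c ∧
      ∀ (x₀ : EuclideanSpace ℝ (Fin n)) (ρ : ℝ), 0 < ρ →
      ∀ w : EuclideanSpace ℝ (Fin n) → ℝ, ContDiff ℝ 1 w →
        pCapacity n p {x ∈ Metric.closedBall x₀ ρ | w x = 0} (Metric.ball x₀ (2 * ρ)) *
            ((volume (Metric.ball x₀ (2 * ρ)))⁻¹ *
              ∫⁻ x in Metric.ball x₀ (2 * ρ), ENNReal.ofReal (|w x| ^ (κ * p))) ^ (1 / κ) ≤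
          ENNReal.ofReal c *
            ∫⁻ x in Metric.ball x₀ (2 * ρ), ENNReal.ofReal (‖fderiv ℝ w x‖ ^ p) := by
  obtain ⟨C, hC, hU⟩ := CapSob.unit_ball hn hp hκ
  obtain ⟨hκ1, -⟩ := CapSob.kappa_facts hn hp hκ
  have hp0 : 0 < p := by linarith
  have hκ0 : 0 < κ := by linarith
  have hq0 : 0 < κ * p := by positivity
  refine ⟨C.toReal + 1, by positivity, ?_⟩
  intro x₀ ρ hρ w hw
  have hR : 0 < 2 * ρ := by positivity
  have hRi : 0 < (2 * ρ)⁻¹ := by positivity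
  have hCle : C ≤ ENNReal.ofReal (C.toReal + 1) := by
    rw [← ENNReal.ofReal_toReal hC]
    apply ENNReal.ofReal_le_ofReal
    simp
  have h1 := CapSob.cap_scale hp x₀ hR w
  have h2 := CapSob.avg_scale (q := κ * p) x₀ hR w hw.continuous
  have h3 := CapSob.grad_scale hp x₀ hR w hw
  have hv : ContDiff ℝ 1 (fun y : EuclideanSpace ℝ (Fin n) => w (x₀ + (2 * ρ) • y)) :=
    hw.comp (contDiff_const.add (contDiff_const_smul (2 * ρ)))
  have h4 := hU _ hv
  rw [show 2 * ρ / 2 = ρ by ring] at h1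
  have e1 : ∀ x, ENNReal.ofReal (|w x| ^ (κ * p)) = ‖w x‖ₑ ^ (κ * p) := fun x => by
    rw [← Real.norm_eq_abs, CapSob.ofReal_norm_rpow _ hq0.le]
  have e2 : ∀ x, ENNReal.ofReal (‖fderiv ℝ w x‖ ^ p) = ‖fderiv ℝ w x‖ₑ ^ p := fun x =>
    CapSob.ofReal_norm_rpow _ hp0.le
  simp only [e1, e2]
  have hrr : ENNReal.ofReal (2 * ρ) * ENNReal.ofReal (2 * ρ)⁻¹ = 1 := by
    rw [← ENNReal.ofReal_mul hR.le, mul_inv_cancel₀ hR.ne', ENNReal.ofReal_one]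
  have hone : (ENNReal.ofReal (2 * ρ) ^ n * ENNReal.ofReal (2 * ρ)⁻¹ ^ p) *
      (ENNReal.ofReal (2 * ρ) ^ p * ENNReal.ofReal (2 * ρ)⁻¹ ^ n) = 1 := by
    calc _ = (ENNReal.ofReal (2 * ρ) * ENNReal.ofReal (2 * ρ)⁻¹) ^ n *
          (ENNReal.ofReal (2 * ρ) ^ p * ENNReal.ofReal (2 * ρ)⁻¹ ^ p) := by
            rw [mul_pow]; ring
      _ = 1 := by
        rw [← ENNReal.mul_rpow_of_nonneg _ _ hp0.le, hrr, one_pow, ENNReal.one_rpow, one_mul]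
  refine (mul_le_mul' h1 (ENNReal.rpow_le_rpow h2 (by positivity))).trans ?_
  rw [mul_assoc]
  refine (mul_le_mul_right (h4.trans (mul_le_mul_right h3 _)) _).trans ?_
  generalize ∫⁻ x in Metric.ball x₀ (2 * ρ), ‖fderiv ℝ w x‖ₑ ^ p = D
  calc _ = ((ENNReal.ofReal (2 * ρ) ^ n * ENNReal.ofReal (2 * ρ)⁻¹ ^ p) *
      (ENNReal.ofReal (2 * ρ) ^ p * ENNReal.ofReal (2 * ρ)⁻¹ ^ n)) * (C * D) := by ring
    _ = C * D := by rw [hone, one_mul]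
    _ ≤ _ := mul_le_mul_left hCle _
end
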